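/- Let $c$, $\mu$, $\varepsilon$ be fixed real numbers with $1 < c < \frac{17}{16}$, $0 < \mu < 1$, $\varepsilon > 0$, and set $\delta = \frac{17 - 16c}{32}$ and $\xi = \frac{16c - 5}{32}$. There exists a constant $C = C(c, \mu, \varepsilon) > 0$ such that for every real $X \geq 2$, with $D = X^{\delta}$ and $\Delta = X^{\xi - c}$, for every real $M \geq 3$, every sieve weight $\lambda$ of level $D$, and every real $\alpha$ with $\Delta \leq |\alpha| \leq M + 1$, one has $\left| \sum_{d \leq D} \lambda(d) \sum_{\substack{\mu X < n \leq X \\ n + 2 \equiv 0 \ (\mathrm{mod}\ d)}} \Lambda(n)\, e(\alpha n^c) \right| \leq C X^{\varepsilon} \left( X^{\frac{1}{3} + \frac{c}{2}} D M^{\frac{1}{2}} + X^{1 - \frac{c}{2}} \Delta^{-\frac{1}{2}} + X^{\frac{3}{4} + \frac{c}{6}} D^{\frac{2}{3}} M^{\frac{1}{6}} + X^{\frac{5}{6}} + X^{1 - \frac{c}{6}} D^{\frac{1}{3}} \Delta^{-\frac{1}{6}} + X^{1 - \frac{c}{4}} \Delta^{-\frac{1}{4}} \right)$. -/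

import Mathlib

/-!
Vaughan's identity with both parameters equal to `X ^ (1 / 3)` splits the sum over primes into
bilinear sums over pairs `(m, l)` with `mu X < m l ≤ X` and `d ∣ m l + 2`. Since `d` is odd, the
divisibility makes `m` and `l` coprime to `d`, so fixing one variable confines the other to a single
residue class modulo `d`. Along a progression of difference `q ≤ Y` in `(κ Y, Y]` the second
derivative test (from Kusmin–Landau) bounds the sum of `e (β m ^ c)` by
`√|β| Y ^ (c / 2) + Y ^ (1 - c / 2) / (q √|β|)`, up to a constant.

*Type I.* For `m ≤ X ^ (1 / 3)` and a monotone weight in `l`, this is applied to the sum over `l`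
with `β = α m ^ c` and summed over `m` and `d`.

*Type II.* For `X ^ (1 / 3) ≤ m ≤ X ^ (2 / 3)` both variables are localised dyadically, the shorter
one near `Q` and the longer one near `P`. The range of the shorter variable is cut into windows of
length `H` and Cauchy–Schwarz is applied window by window; opening the square leaves sums of
`e (α (l₁ ^ c - l₂ ^ c) m ^ c)` over `m` in a residue class modulo `lcm d₁ d₂`. The diagonal costs
`∑ 1 / lcm d₁ d₂ ≤ (1 + log X) ^ 3`, and off the diagonal the second derivative test applies because
`|l₁ ^ c - l₂ ^ c|` is comparable with `Q ^ (c - 1) |l₁ - l₂|`. Optimising `H` gives the four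
Type II terms; when the optimal `H` is below `1` they exceed the trivial bound.

The resulting estimate depends on `α` only through powers of `|α|`: insert `|α| ≤ M + 1 ≤ 2 M` in
the positive powers, `|α| ≥ Δ` in the negative ones, and absorb the logarithms in `X ^ ε`.
-/

open scoped ArithmeticFunction

/-- `e(t) = e^{2πit}`. -/
noncomputable def e (t : ℝ) : ℂ := Complex.exp (2 * Real.pi * Complex.I * t)

/-- A sieve weight of level `D`. -/
def IsSieveWeight (D : ℝ) (lam : ℕ → ℝ) : Prop :=
  (∀ d : ℕ, |lam d| ≤ 1) ∧ ∀ d : ℕ, (D < (d : ℝ) ∨ 2 ∣ d ∨ ¬ Squarefree d) → lam d = 0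

section Development

open Finset Real
open scoped ComplexConjugate FourierTransform
open scoped ArithmeticFunction.Moebius ArithmeticFunction.zeta

/-! ### The Kusmin–Landau inequality -/

lemma e_eq_fourierChar (t : ℝ) : e t = 𝐞 t := by
  rw [e, fourierChar_apply]
  push_cast
  ring_nf

lemma norm_e (t : ℝ) : ‖e t‖ = 1 := by
  rw [e_eq_fourierChar, Circle.norm_coe]

lemma e_add (s t : ℝ) : e (s + t) = e s * e t := by
  simp only [e_eq_fourierChar, AddChar.map_add_eq_mul, Circle.coe_mul]

lemma e_neg (t : ℝ) : e (-t) = conj (e t) := by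
  simp only [e_eq_fourierChar, AddChar.map_neg_eq_inv, Circle.coe_inv_eq_conj]

lemma e_intCast (j : ℤ) : e j = 1 :=
  Complex.exp_eq_one_iff.mpr ⟨j, by push_cast; ring⟩

lemma norm_sum_e_le_card {ι : Type*} (s : Finset ι) (f : ι → ℝ) : ‖∑ k ∈ s, e (f k)‖ ≤ #s := by
  simpa only [norm_e, sum_const, nsmul_eq_mul, mul_one] using norm_sum_le s fun k => e (f k)

lemma e_eq_sin_cos (t : ℝ) :
    e t = 1 - 2 * sin (π * t) ^ 2 + 2 * sin (π * t) * cos (π * t) * Complex.I := by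
  have double_angle : e t = Complex.exp (((2 * (π * t) : ℝ) : ℂ) * Complex.I) := by
    rw [e]
    push_cast
    ring_nf
  rw [double_angle, Complex.exp_mul_I, ← Complex.ofReal_cos, ← Complex.ofReal_sin, cos_two_mul,
    cos_sq', sin_two_mul]
  push_cast
  ring

/-- The inverse of `1 - e t` for `t ∉ ℤ`, written so that its real part is constant: the variation
of `invOneSubE` along a sequence is then that of the monotone function `cot (π t)`. -/
noncomputable def invOneSubE (t : ℝ) : ℂ := 1 / 2 + Complex.I / 2 * (cot (π * t) : ℝ)

lemma invOneSubE_mul_one_sub_e {t : ℝ} (ht : sin (π * t) ≠ 0) :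
    invOneSubE t * (1 - e t) = 1 := by
  have sin_sq_add_cos_sq' : (sin (π * t) : ℂ) ^ 2 + (cos (π * t) : ℂ) ^ 2 = 1 := by
    exact_mod_cast sin_sq_add_cos_sq (π * t)
  have hsin : (sin (π * t) : ℂ) ≠ 0 := by exact_mod_cast ht
  rw [e_eq_sin_cos, invOneSubE, cot_eq_cos_div_sin]
  push_cast
  push_cast at hsin sin_sq_add_cos_sq'
  field_simp
  linear_combination (2 * Complex.sin (π * t)) * sin_sq_add_cos_sq' -
    (2 * Complex.cos (π * t) ^ 2 * Complex.sin (π * t)) * Complex.I_sq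

lemma sin_pi_mul_pos {t : ℝ} (ht : t ∈ Set.Ioo 0 1) : 0 < sin (π * t) :=
  sin_pos_of_pos_of_lt_pi (mul_pos pi_pos ht.1) (mul_lt_of_lt_one_right pi_pos ht.2)

lemma two_mul_le_sin_pi_mul {δ t : ℝ} (hδ : 0 ≤ δ) (ht : t ∈ Set.Icc δ (1 - δ)) :
    2 * δ ≤ sin (π * t) := by
  have le_sin_of_le_half {s : ℝ} (h₀ : 0 ≤ s) (h₁ : s ≤ 1 / 2) : 2 * s ≤ sin (π * s) := by
    have := mul_le_sin (x := π * s) (by positivity) (by nlinarith [pi_pos])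
    rwa [← mul_assoc, div_mul_cancel₀ _ pi_ne_zero] at this
  rcases le_total t (1 / 2) with h | h
  · linarith [ht.1, le_sin_of_le_half (hδ.trans ht.1) h]
  · have := le_sin_of_le_half (s := 1 - t) (by linarith [ht.2]) (by linarith)
    rw [mul_sub π, mul_one, sin_pi_sub] at this
    linarith [ht.2]

lemma abs_cot_pi_mul_le {δ t : ℝ} (hδ : 0 < δ) (ht : t ∈ Set.Icc δ (1 - δ)) :
    |cot (π * t)| ≤ 1 / (2 * δ) := by
  have hsin := two_mul_le_sin_pi_mul hδ.le ht
  rw [cot_eq_cos_div_sin, abs_div, abs_of_pos (show 0 < sin (π * t) by linarith)]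
  exact div_le_div₀ zero_le_one (abs_cos_le_one _) (by linarith) hsin

lemma cot_pi_mul_antitoneOn : AntitoneOn (fun t : ℝ => cot (π * t)) (Set.Ioo 0 1) := by
  intro s hs t ht hst
  simp only [cot_eq_cos_div_sin]
  rw [div_le_div_iff₀ (sin_pi_mul_pos ht) (sin_pi_mul_pos hs)]
  have := sin_nonneg_of_nonneg_of_le_pi (x := π * t - π * s)
    (by nlinarith [pi_pos]) (by nlinarith [pi_pos, hs.1, ht.2])
  rw [sin_sub] at this
  linarith

lemma norm_invOneSubE_le {δ t : ℝ} (hδ : 0 < δ) (ht : t ∈ Set.Icc δ (1 - δ)) :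
    ‖invOneSubE t‖ ≤ 1 / (2 * δ) := by
  have hcot := abs_cot_pi_mul_le hδ ht
  have one_le : 1 ≤ 1 / (2 * δ) := by
    rw [le_div_iff₀ (by positivity)]
    linarith [ht.1, ht.2]
  calc ‖invOneSubE t‖ ≤ ‖(1 / 2 : ℂ)‖ + ‖Complex.I / 2 * (cot (π * t) : ℝ)‖ := norm_add_le _ _
    _ = 1 / 2 + 1 / 2 * |cot (π * t)| := by
      simp only [norm_mul, norm_div, norm_one, Complex.norm_ofNat, Complex.norm_I,
        Complex.norm_real, norm_eq_abs]
    _ ≤ 1 / (2 * δ) := by linarith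

lemma norm_invOneSubE_sub {s t : ℝ} (hs : s ∈ Set.Ioo 0 1) (ht : t ∈ Set.Ioo 0 1) (hst : s ≤ t) :
    ‖invOneSubE t - invOneSubE s‖ = (cot (π * s) - cot (π * t)) / 2 := by
  have hcot : cot (π * t) ≤ cot (π * s) := cot_pi_mul_antitoneOn hs ht hst
  have : invOneSubE t - invOneSubE s = Complex.I / 2 * ((cot (π * t) - cot (π * s) : ℝ) : ℂ) := by
    simp only [invOneSubE]
    push_cast
    ring
  rw [this, norm_mul, norm_div, Complex.norm_I, Complex.norm_ofNat, Complex.norm_real,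
    norm_eq_abs, abs_of_nonpos (by linarith)]
  ring

lemma norm_sum_mul_sub_succ_le {R : Type*} [NormedRing R] (w z : ℕ → R)
    (hz : ∀ k, ‖z k‖ ≤ 1) (n : ℕ) :
    ‖∑ k ∈ range (n + 1), w k * (z k - z (k + 1))‖ ≤
      ‖w 0‖ + ‖w n‖ + ∑ k ∈ range n, ‖w (k + 1) - w k‖ := by
  have norm_mul_le_left (x : R) (k : ℕ) : ‖x * z k‖ ≤ ‖x‖ :=
    (norm_mul_le _ _).trans (mul_le_of_le_one_right (norm_nonneg x) (hz k))
  have abel : ∑ k ∈ range (n + 1), w k * (z k - z (k + 1)) =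
      w 0 * z 0 - w n * z (n + 1) + ∑ k ∈ range n, (w (k + 1) - w k) * z (k + 1) := by
    induction n with
    | zero => simp [mul_sub]
    | succ n ih =>
      rw [sum_range_succ, ih, sum_range_succ]
      noncomm_ring
  rw [abel]
  refine (norm_add_le _ _).trans (add_le_add ((norm_sub_le _ _).trans ?_) ?_)
  · exact add_le_add (norm_mul_le_left _ _) (norm_mul_le_left _ _)
  · exact norm_sum_le_of_le _ fun k _ => norm_mul_le_left _ _

theorem kusmin_landau {f : ℕ → ℝ} {j : ℤ} {δ : ℝ} (hδ : 0 < δ) {n : ℕ}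
    (hmem : ∀ k < n, f (k + 1) - f k - j ∈ Set.Icc δ (1 - δ))
    (hmono : ∀ k, k + 1 < n → f (k + 1) - f k ≤ f (k + 2) - f (k + 1)) :
    ‖∑ k ∈ range n, e (f k)‖ ≤ 2 / δ := by
  rcases n with _ | n
  · simpa using by positivity
  set θ : ℕ → ℝ := fun k => f (k + 1) - f k - j with hθ
  have hIoo (k : ℕ) (hk : k < n + 1) : θ k ∈ Set.Ioo 0 1 :=
    ⟨hδ.trans_le (hmem k hk).1, (hmem k hk).2.trans_lt (by linarith)⟩
  have e_eq_mul_sub : ∀ k ∈ range (n + 1),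
      e (f k) = invOneSubE (θ k) * (e (f k) - e (f (k + 1))) := by
    intro k hk
    have hinv := invOneSubE_mul_one_sub_e (sin_pi_mul_pos (hIoo k (mem_range.mp hk))).ne'
    have hstep : e (f (k + 1)) = e (f k) * e (θ k) := by
      rw [← e_add, ← mul_one (e (f k + θ k)), ← e_intCast j, ← e_add]
      congr 1
      simp only [hθ]
      ring
    rw [hstep]
    linear_combination -e (f k) * hinv
  have variation : ∑ k ∈ range n, ‖invOneSubE (θ (k + 1)) - invOneSubE (θ k)‖ =
      (cot (π * θ 0) - cot (π * θ n)) / 2 := by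
    rw [← sum_range_sub' (fun k => cot (π * θ k)) n, sum_div]
    refine sum_congr rfl fun k hk => ?_
    rw [mem_range] at hk
    exact norm_invOneSubE_sub (hIoo k (by omega)) (hIoo (k + 1) (by omega))
      (sub_le_sub_right (hmono k (by omega)) _)
  have first := hmem 0 n.succ_pos
  have last := hmem n n.lt_succ_self
  rw [sum_congr rfl e_eq_mul_sub]
  calc _ ≤ ‖invOneSubE (θ 0)‖ + ‖invOneSubE (θ n)‖ + (cot (π * θ 0) - cot (π * θ n)) / 2 :=
        variation ▸ norm_sum_mul_sub_succ_le (fun k => invOneSubE (θ k)) (fun k => e (f k))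
          (fun k => (norm_e _).le) n
    _ ≤ 1 / (2 * δ) + 1 / (2 * δ) + (1 / (2 * δ) + 1 / (2 * δ)) / 2 := by
        have := le_of_abs_le (abs_cot_pi_mul_le hδ first)
        have := neg_le_of_abs_le (abs_cot_pi_mul_le hδ last)
        gcongr
        · exact norm_invOneSubE_le hδ first
        · exact norm_invOneSubE_le hδ last
        · linarith
    _ ≤ 2 / δ := by
        have : 2 / δ = 4 * (1 / (2 * δ)) := by field_simp; norm_num
        have : 0 < 1 / (2 * δ) := by positivity
        linarith

/-! ### The second derivative test -/

lemma exists_eq_Ico_of_ordConnected {S : Finset ℕ} (hS : (S : Set ℕ).OrdConnected) :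
    ∃ a n, S = Ico a (a + n) := by
  rcases S.eq_empty_or_nonempty with rfl | hne
  · exact ⟨0, 0, by simp⟩
  refine ⟨S.min' hne, S.max' hne + 1 - S.min' hne, ?_⟩
  have hle : S.min' hne ≤ S.max' hne := S.min'_le _ (S.max'_mem hne)
  ext y
  rw [mem_Ico]
  constructor
  · intro hy
    have := S.min'_le _ hy
    have := S.le_max' _ hy
    omega
  · rintro ⟨hmin, hmax⟩
    exact hS.out (S.min'_mem hne) (S.max'_mem hne) ⟨hmin, by omega⟩

lemma card_le_of_mul_sub_le_sub {θ : ℕ → ℝ} {S : Finset ℕ} {lam u w : ℝ} (hlam : 0 < lam)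
    (hw : 0 ≤ w) (hθ : ∀ a ∈ S, ∀ b ∈ S, a ≤ b → lam * (b - a) ≤ θ b - θ a)
    (hS : ∀ k ∈ S, θ k ∈ Set.Icc u (u + w)) : (#S : ℝ) ≤ w / lam + 1 := by
  rcases S.eq_empty_or_nonempty with rfl | hne
  · simpa using by positivity
  have hmin := S.min'_mem hne
  have hmax := S.max'_mem hne
  have hle : S.min' hne ≤ S.max' hne := S.min'_le _ hmax
  have hcard : #S ≤ S.max' hne + 1 - S.min' hne := by
    rw [← Nat.card_Icc]
    exact card_le_card fun k hk => mem_Icc.mpr ⟨S.min'_le _ hk, S.le_max' _ hk⟩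
  have hcard' : (#S : ℝ) ≤ (S.max' hne : ℝ) - S.min' hne + 1 := by
    have : #S + S.min' hne ≤ S.max' hne + 1 := by omega
    have : (#S : ℝ) + S.min' hne ≤ S.max' hne + 1 := by exact_mod_cast this
    linarith
  have hspan : (S.max' hne : ℝ) - S.min' hne ≤ w / lam := by
    rw [le_div_iff₀' hlam]
    linarith [hθ _ hmin _ hmax hle, (hS _ hmin).1, (hS _ hmax).2]
  linarith

lemma increment_sub_increment_mem {f : ℕ → ℝ} {N : ℕ} {lam lam' : ℝ}
    (hf : ∀ k < N, f (k + 2) - 2 * f (k + 1) + f k ∈ Set.Icc lam lam')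
    {a b : ℕ} (hab : a ≤ b) (hb : b < N) :
    (f (b + 1) - f b) - (f (a + 1) - f a) ∈ Set.Icc (lam * (b - a)) (lam' * (b - a)) := by
  induction b, hab using Nat.le_induction with
  | base => simp
  | succ b _ ih =>
    have ih := ih (by omega)
    have hstep := hf b (by omega)
    push_cast
    constructor <;> nlinarith [ih.1, ih.2, hstep.1, hstep.2]

lemma norm_sum_e_increment_mem_le {f : ℕ → ℝ} {N : ℕ} {δ : ℝ} (hδ : 0 < δ)
    (hmono : ∀ a b, a ≤ b → b < N → f (a + 1) - f a ≤ f (b + 1) - f b) (j : ℤ) :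
    ‖∑ k ∈ range N with j + δ < f (k + 1) - f k ∧ f (k + 1) - f k < j + 1 - δ, e (f k)‖ ≤
      2 / δ := by
  set G := {k ∈ range N | j + δ < f (k + 1) - f k ∧ f (k + 1) - f k < j + 1 - δ} with hG
  have mem_G (k : ℕ) :
      k ∈ G ↔ k < N ∧ j + δ < f (k + 1) - f k ∧ f (k + 1) - f k < j + 1 - δ := by
    rw [hG, mem_filter, mem_range]
  have hconn : (G : Set ℕ).OrdConnected := by
    refine ⟨fun x hx z hz y hy => ?_⟩
    rw [mem_coe, mem_G] at hx hz ⊢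
    have hyN : y < N := hy.2.trans_lt hz.1
    exact ⟨hyN, hx.2.1.trans_le (hmono x y hy.1 hyN), (hmono y z hy.2 hz.1).trans_lt hz.2.2⟩
  obtain ⟨a, n, hI⟩ := exists_eq_Ico_of_ordConnected hconn
  have add_mem (k : ℕ) (hk : k < n) : a + k ∈ G := by
    rw [hI, mem_Ico]
    omega
  rw [hI, sum_Ico_eq_sum_range, Nat.add_sub_cancel_left]
  refine kusmin_landau (f := fun k => f (a + k)) (j := j) hδ (fun k hk => ?_) fun k hk => ?_
  · have := ((mem_G _).mp (add_mem k hk)).2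
    rw [← add_assoc]
    constructor <;> linarith [this.1, this.2]
  · exact hmono (a + k) (a + k + 1) (by omega) ((mem_G _).mp (add_mem (k + 1) hk)).1

lemma norm_sum_e_le_of_increment_mem_Icc {f : ℕ → ℝ} {lam u : ℝ} (hlam : 0 < lam) {S : Finset ℕ}
    (hf : ∀ a ∈ S, ∀ b ∈ S, a ≤ b → lam * (b - a) ≤ (f (b + 1) - f b) - (f (a + 1) - f a))
    (hS : ∀ k ∈ S, f (k + 1) - f k ∈ Set.Icc u (u + √lam)) :
    ‖∑ k ∈ S, e (f k)‖ ≤ 1 / √lam + 1 := by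
  have : 1 / √lam = √lam / lam := by
    rw [div_eq_div_iff (sqrt_pos.mpr hlam).ne' hlam.ne', one_mul, mul_self_sqrt hlam.le]
  rw [this]
  exact (norm_sum_e_le_card S f).trans (card_le_of_mul_sub_le_sub hlam (sqrt_nonneg lam) hf hS)

lemma norm_sum_e_floor_increment_eq_le {f : ℕ → ℝ} {N : ℕ} {lam : ℝ} (hlam : 0 < lam)
    (hlam' : lam < 1 / 4)
    (hf : ∀ a b, a ≤ b → b < N → lam * (b - a) ≤ (f (b + 1) - f b) - (f (a + 1) - f a)) (j : ℤ) :
    ‖∑ k ∈ range N with ⌊f (k + 1) - f k⌋ = j, e (f k)‖ ≤ 5 / √lam := by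
  set δ := √lam
  set θ : ℕ → ℝ := fun k => f (k + 1) - f k
  have hδ0 : 0 < δ := sqrt_pos.mpr hlam
  have hδ_half : δ < 1 / 2 := (sqrt_lt' (by norm_num)).mpr (by linarith)
  have two_le : 2 ≤ 1 / δ := by rw [le_div_iff₀ hδ0]; linarith
  have hmono (a b : ℕ) (hab : a ≤ b) (hb : b < N) : θ a ≤ θ b := by
    have : (0 : ℝ) ≤ b - a := sub_nonneg.mpr (by exact_mod_cast hab)
    linarith [hf a b hab hb, mul_nonneg hlam.le this]
  have norm_sum_near_le (S : Finset ℕ) (u : ℝ) (hS : ∀ k ∈ S, k < N ∧ θ k ∈ Set.Icc u (u + δ)) :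
      ‖∑ k ∈ S, e (f k)‖ ≤ 1 / δ + 1 :=
    norm_sum_e_le_of_increment_mem_Icc hlam (fun a _ b hb hab => hf a b hab (hS b hb).1)
      fun k hk => (hS k hk).2
  set F := {k ∈ range N | ⌊θ k⌋ = j} with hF
  have mem_F (k : ℕ) : k ∈ F ↔ k < N ∧ j ≤ θ k ∧ θ k < j + 1 := by
    rw [hF, mem_filter, mem_range, Int.floor_eq_iff]
  have low := norm_sum_near_le {k ∈ F | θ k ≤ j + δ} j fun k hk => by
    rw [mem_filter, mem_F] at hk
    exact ⟨hk.1.1, hk.1.2.1, hk.2⟩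
  have high := norm_sum_near_le {k ∈ {k ∈ F | ¬ θ k ≤ j + δ} | j + 1 - δ ≤ θ k} (j + 1 - δ)
    fun k hk => by
      rw [mem_filter, mem_filter, mem_F] at hk
      exact ⟨hk.1.1.1, hk.2, by linarith [hk.1.1.2.2]⟩
  have middle_eq : {k ∈ {k ∈ F | ¬ θ k ≤ j + δ} | ¬ j + 1 - δ ≤ θ k} =
      {k ∈ range N | j + δ < θ k ∧ θ k < j + 1 - δ} := by
    ext k
    simp only [mem_filter, mem_F, mem_range, not_le]
    exact ⟨fun ⟨⟨h₁, h₂⟩, h₃⟩ => ⟨h₁.1, h₂, h₃⟩,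
      fun ⟨h₁, h₂, h₃⟩ => ⟨⟨⟨h₁, by linarith, by linarith⟩, h₂⟩, h₃⟩⟩
  have middle := norm_sum_e_increment_mem_le hδ0 hmono j
  rw [← middle_eq] at middle
  rw [← sum_filter_add_sum_filter_not F (fun k => θ k ≤ j + δ),
    ← sum_filter_add_sum_filter_not {k ∈ F | ¬ θ k ≤ j + δ} (fun k => j + 1 - δ ≤ θ k)]
  calc _ ≤ (1 / δ + 1) + ((1 / δ + 1) + 2 / δ) :=
        norm_add_le_of_le low (norm_add_le_of_le high middle)
    _ ≤ 5 / δ := by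
        rw [div_eq_mul_one_div 2, div_eq_mul_one_div 5]
        linarith

lemma card_image_floor_le {θ : ℕ → ℝ} {N : ℕ} {u w : ℝ} (hw : 0 ≤ w)
    (hθ : ∀ k < N, θ k ∈ Set.Icc u (u + w)) : (#((range N).image fun k => ⌊θ k⌋) : ℝ) ≤ w + 2 := by
  have hsub : ((range N).image fun k => ⌊θ k⌋) ⊆ Icc ⌊u⌋ ⌊u + w⌋ := fun j hj => by
    obtain ⟨k, hk, rfl⟩ := mem_image.mp hj
    have := hθ k (mem_range.mp hk)
    exact mem_Icc.mpr ⟨Int.floor_le_floor this.1, Int.floor_le_floor this.2⟩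
  have hfloor : ⌊u⌋ ≤ ⌊u + w⌋ + 1 :=
    (Int.floor_le_floor (le_add_of_nonneg_right hw)).trans (lt_add_one _).le
  calc (#((range N).image fun k => ⌊θ k⌋) : ℝ) ≤ #(Icc ⌊u⌋ ⌊u + w⌋) := by
        exact_mod_cast card_le_card hsub
    _ = ((⌊u + w⌋ + 1 - ⌊u⌋ : ℤ) : ℝ) := by
        exact_mod_cast Int.card_Icc_of_le _ _ hfloor
    _ ≤ w + 2 := by
        push_cast
        linarith [Int.floor_le (u + w), Int.lt_floor_add_one u]

/- The indices are grouped by the integer part `j` of the increment. In each group the increments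
within `√lam` of `j` or `j + 1` are counted, and Kusmin–Landau handles the others. -/
theorem norm_sum_e_le_of_second_difference_mem {f : ℕ → ℝ} {N : ℕ} {lam h : ℝ} (hlam : 0 < lam)
    (hh : 1 ≤ h) (hf : ∀ k < N, f (k + 2) - 2 * f (k + 1) + f k ∈ Set.Icc lam (h * lam)) :
    ‖∑ k ∈ range N, e (f k)‖ ≤ 10 * h * (N * √lam + 1 / √lam) := by
  have hsqrt : 0 < √lam := sqrt_pos.mpr hlam
  rcases le_or_gt (1 / 4) lam with hbig | hsmall
  · have half_le : (1 : ℝ) / 2 ≤ √lam := le_sqrt_of_sq_le (by linarith)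
    calc ‖∑ k ∈ range N, e (f k)‖ ≤ N := by simpa using norm_sum_e_le_card (range N) f
      _ ≤ 10 * 1 * (N * √lam) := by nlinarith [(Nat.cast_nonneg N : (0 : ℝ) ≤ N)]
      _ ≤ 10 * h * (N * √lam + 1 / √lam) := by
        gcongr
        exact le_add_of_nonneg_right (by positivity)
  have hinc {a b : ℕ} (hab : a ≤ b) (hb : b < N) := increment_sub_increment_mem hf hab hb
  set θ : ℕ → ℝ := fun k => f (k + 1) - f k
  have hrange (k : ℕ) (hk : k < N) : θ k ∈ Set.Icc (θ 0) (θ 0 + h * lam * N) := by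
    obtain ⟨hlow, hup⟩ := hinc k.zero_le hk
    rw [Nat.cast_zero, sub_zero] at hlow hup
    have : h * lam * k ≤ h * lam * N := by gcongr
    exact ⟨by linarith [mul_nonneg hlam.le k.cast_nonneg], by linarith⟩
  have hcount : (#((range N).image fun k => ⌊θ k⌋) : ℝ) ≤ h * lam * N + 2 :=
    card_image_floor_le (by positivity) hrange
  rw [← sum_fiberwise_of_maps_to (fun k hk => mem_image_of_mem (fun k => ⌊θ k⌋) hk)]
  calc _ ≤ ∑ j ∈ (range N).image fun k => ⌊θ k⌋, 5 / √lam :=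
        norm_sum_le_of_le _ fun j _ =>
          norm_sum_e_floor_increment_eq_le hlam hsmall (fun a b hab hb => (hinc hab hb).1) j
    _ ≤ (h * lam * N + 2) * (5 / √lam) := by
        rw [sum_const, nsmul_eq_mul]
        gcongr
    _ = 5 * h * (N * √lam) + 10 * (1 / √lam) := by
        nth_rewrite 1 [← mul_self_sqrt hlam.le]
        field_simp
        ring
    _ ≤ 10 * h * (N * √lam + 1 / √lam) := by
        have : 0 ≤ N * √lam := by positivity
        have : 0 ≤ 1 / √lam := by positivity
        nlinarith

/-! ### Power phases along arithmetic progressions -/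

lemma exists_rpow_sub_rpow_eq (p : ℝ) {x y : ℝ} (hx : 0 < x) (hxy : x < y) :
    ∃ u ∈ Set.Ioo x y, y ^ p - x ^ p = p * u ^ (p - 1) * (y - x) := by
  obtain ⟨u, hu, hslope⟩ := exists_hasDerivAt_eq_slope (fun t : ℝ => t ^ p)
    (fun t => p * t ^ (p - 1)) hxy
    (fun t ht => (continuousAt_rpow_const t p
      (Or.inl (hx.trans_le ht.1).ne')).continuousWithinAt)
    (fun t ht => hasDerivAt_rpow_const (Or.inl (hx.trans ht.1).ne'))
  rw [eq_div_iff (by linarith)] at hslope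
  exact ⟨u, hu, hslope.symm⟩

lemma exists_second_difference_rpow_eq (c : ℝ) {x s : ℝ} (hx : 0 < x) (hs : 0 < s) :
    ∃ u ∈ Set.Ioo x (x + 2 * s),
      (x + 2 * s) ^ c - 2 * (x + s) ^ c + x ^ c = c * (c - 1) * s ^ 2 * u ^ (c - 2) := by
  have hderiv (t : ℝ) (ht : x ≤ t) : HasDerivAt (fun t : ℝ => (t + s) ^ c - t ^ c)
      (c * (t + s) ^ (c - 1) - c * t ^ (c - 1)) t := by
    have hshift := ((hasDerivAt_id t).add_const s).rpow_const (p := c)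
      (Or.inl (show t + s ≠ 0 by linarith))
    rw [one_mul] at hshift
    exact hshift.sub (hasDerivAt_rpow_const (Or.inl (by linarith)))
  obtain ⟨t, ht, hslope⟩ := exists_hasDerivAt_eq_slope (fun t : ℝ => (t + s) ^ c - t ^ c)
    (fun t => c * (t + s) ^ (c - 1) - c * t ^ (c - 1)) (show x < x + s by linarith)
    (fun t ht => (hderiv t ht.1).continuousAt.continuousWithinAt) (fun t ht => hderiv t ht.1.le)
  obtain ⟨u, hu, heq⟩ :=
    exists_rpow_sub_rpow_eq (c - 1) (show 0 < t by linarith [ht.1]) (lt_add_of_pos_right t hs)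
  refine ⟨u, ⟨ht.1.trans hu.1, by linarith [hu.2, ht.2]⟩, ?_⟩
  rw [eq_div_iff (by linarith), show x + s + s = x + 2 * s by ring] at hslope
  rw [show c - 1 - 1 = c - 2 by ring] at heq
  linear_combination -hslope + c * s * heq

lemma second_difference_mul_rpow_mem {c κ β s x Y : ℝ} (hc : 1 < c) (hc' : c ≤ 2) (hκ : 0 < κ)
    (hβ : 0 ≤ β) (hs : 0 < s) (hY : 0 < Y) (hx : κ * Y ≤ x) (hx' : x + 2 * s ≤ 3 * Y) :
    β * (x + 2 * s) ^ c - 2 * (β * (x + s) ^ c) + β * x ^ c ∈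
      Set.Icc (β * (c * (c - 1) * s ^ 2) * (3 * Y) ^ (c - 2))
        ((κ / 3) ^ (c - 2) * (β * (c * (c - 1) * s ^ 2) * (3 * Y) ^ (c - 2))) := by
  have hκY : 0 < κ * Y := by positivity
  have : 0 < c - 1 := by linarith
  obtain ⟨u, hu, heq⟩ := exists_second_difference_rpow_eq c (hκY.trans_le hx) hs
  have hu0 : 0 < u := by linarith [hu.1]
  have hvalue : β * (x + 2 * s) ^ c - 2 * (β * (x + s) ^ c) + β * x ^ c =
      β * (c * (c - 1) * s ^ 2) * u ^ (c - 2) := by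
    linear_combination β * heq
  rw [hvalue, mul_left_comm ((κ / 3) ^ (c - 2)), ← mul_rpow (by positivity) (by positivity),
    show κ / 3 * (3 * Y) = κ * Y by ring]
  constructor
  · gcongr ?_ * ?_
    exact rpow_le_rpow_of_nonpos hu0 (by linarith [hu.2]) (by linarith)
  · gcongr ?_ * ?_
    exact rpow_le_rpow_of_nonpos hκY (by linarith [hu.1]) (by linarith)

/-- `S` consists of consecutive terms of an arithmetic progression of difference `q`, phrased so
that neither the residue class nor the end points are named. -/
def IsProgressionSegment (q : ℕ) (S : Finset ℕ) : Prop :=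
  (∀ x ∈ S, ∀ y ∈ S, x ≡ y [MOD q]) ∧
    ∀ x ∈ S, ∀ z ∈ S, ∀ y, x ≤ y → y ≤ z → y ≡ x [MOD q] → y ∈ S

namespace IsProgressionSegment

variable {q : ℕ} {S : Finset ℕ}

lemma exists_eq_image (h : IsProgressionSegment q S) (hq : 0 < q) (hne : S.Nonempty) :
    ∃ s K, s ∈ S ∧ s + q * K ∈ S ∧ S = (range (K + 1)).image (fun k => s + q * k) := by
  have exists_eq_add (x : ℕ) (hx : x ∈ S) : ∃ k, x = S.min' hne + q * k := by
    have hle := S.min'_le _ hx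
    obtain ⟨k, hk⟩ := (Nat.modEq_iff_dvd' hle).mp (h.1 _ (S.min'_mem hne) _ hx)
    exact ⟨k, by omega⟩
  obtain ⟨K, hK⟩ := exists_eq_add _ (S.max'_mem hne)
  refine ⟨S.min' hne, K, S.min'_mem hne, hK ▸ S.max'_mem hne, ?_⟩
  ext y
  rw [mem_image]
  constructor
  · intro hy
    obtain ⟨k, hk⟩ := exists_eq_add y hy
    have hmax := S.le_max' _ hy
    have hkK : k ≤ K := Nat.le_of_mul_le_mul_left (show q * k ≤ q * K by omega) hq
    exact ⟨k, mem_range_succ_iff.mpr hkK, hk.symm⟩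
  · rintro ⟨k, hk, rfl⟩
    have : q * k ≤ q * K := Nat.mul_le_mul_left _ (mem_range_succ_iff.mp hk)
    exact h.2 _ (S.min'_mem hne) _ (S.max'_mem hne) _ (by omega) (by omega) (by simp [Nat.ModEq])

lemma filter_ge (h : IsProgressionSegment q S) (j : ℕ) :
    IsProgressionSegment q {l ∈ S | j ≤ l} := by
  refine ⟨fun x hx y hy => ?_, fun x hx z hz y hxy hyz hmod => ?_⟩
  · exact h.1 x (mem_filter.mp hx).1 y (mem_filter.mp hy).1
  · rw [mem_filter] at hx hz ⊢
    exact ⟨h.2 x hx.1 z hz.1 y hxy hyz hmod, hx.2.trans hxy⟩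

lemma card_le (h : IsProgressionSegment q S) (hq : 0 < q) {Y : ℝ} (hY : 0 ≤ Y)
    (hS : ∀ x ∈ S, (x : ℝ) ≤ Y) : (#S : ℝ) ≤ Y / q + 1 := by
  rcases S.eq_empty_or_nonempty with rfl | hne
  · simpa using by positivity
  obtain ⟨s, K, -, hK, hS'⟩ := h.exists_eq_image hq hne
  have hcard : #S ≤ K + 1 := hS' ▸ card_image_le.trans (card_range _).le
  have hKY : (K : ℝ) ≤ Y / q := by
    have hend := hS _ hK
    push_cast at hend
    rw [le_div_iff₀' (by exact_mod_cast hq)]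
    linarith [(Nat.cast_nonneg s : (0 : ℝ) ≤ s)]
  have : (#S : ℝ) ≤ K + 1 := by exact_mod_cast hcard
  linarith

lemma exists_sum_eq_sum_range {M : Type*} [AddCommMonoid M] (h : IsProgressionSegment q S)
    (hq : 0 < q) (hne : S.Nonempty) (F : ℕ → M) :
    ∃ s K, s ∈ S ∧ s + q * K ∈ S ∧ ∑ m ∈ S, F m = ∑ k ∈ range (K + 1), F (s + q * k) := by
  obtain ⟨s, K, hs, hK, hS⟩ := h.exists_eq_image hq hne
  refine ⟨s, K, hs, hK, ?_⟩
  have hinj : Function.Injective fun k => s + q * k := fun a b hab =>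
    Nat.eq_of_mul_eq_mul_left hq (Nat.add_left_cancel hab)
  conv_lhs => rw [hS]
  exact sum_image hinj.injOn

end IsProgressionSegment

lemma norm_sum_range_e_mul_rpow_le {c κ β Y : ℝ} {q s K : ℕ} (hc : 1 < c) (hc' : c ≤ 2)
    (hκ : 0 < κ) (hκ' : κ ≤ 1) (hβ : 0 < β) (hq : 0 < q) (hqY : (q : ℝ) ≤ Y) (hs : κ * Y < s)
    (hK : (s + q * K : ℝ) ≤ Y) {lam : ℝ}
    (hlam : lam = β * (c * (c - 1) * q ^ 2) * (3 * Y) ^ (c - 2)) :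
    ‖∑ k ∈ range (K + 1), e (β * ((s + q * k : ℕ) : ℝ) ^ c)‖ ≤
      10 * (κ / 3) ^ (c - 2) * ((K + 1 : ℕ) * √lam + 1 / √lam) := by
  have hq' : (0 : ℝ) < q := by exact_mod_cast hq
  have hY : 0 < Y := hq'.trans_le hqY
  have : 0 < c - 1 := by linarith
  refine norm_sum_e_le_of_second_difference_mem (f := fun k => β * ((s + q * k : ℕ) : ℝ) ^ c)
    (hlam ▸ by positivity)
    (one_le_rpow_of_pos_of_le_one_of_nonpos (by positivity) (by linarith) (by linarith))
    fun k hk => ?_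
  have hkK : (q : ℝ) * k ≤ q * K := by
    gcongr
    omega
  have hmem := second_difference_mul_rpow_mem (x := s + q * k) hc hc' hκ hβ.le hq' hY
    (by nlinarith [(Nat.cast_nonneg k : (0 : ℝ) ≤ k)]) (by linarith)
  rw [← hlam, show (s + q * k + 2 * q : ℝ) = (s + q * (k + 2) : ℕ) by push_cast; ring,
    show (s + q * k + q : ℝ) = (s + q * (k + 1) : ℕ) by push_cast; ring,
    show (s + q * k : ℝ) = (s + q * k : ℕ) by push_cast; ring] at hmem
  exact hmem

lemma sqrt_mul_rpow_sub_two {c β q Y : ℝ} (hc : 1 < c) (hβ : 0 < β) (hq : 0 < q) (hY : 0 < Y) :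
    √(β * (c * (c - 1) * q ^ 2) * (3 * Y) ^ (c - 2)) =
      √(c * (c - 1) * 3 ^ (c - 2)) * √β * q * Y ^ (c / 2 - 1) := by
  have hA : 0 < c * (c - 1) * (3 : ℝ) ^ (c - 2) :=
    mul_pos (mul_pos (by linarith) (by linarith)) (by positivity)
  have : 0 < √(c * (c - 1) * 3 ^ (c - 2)) := sqrt_pos.mpr hA
  rw [sqrt_eq_iff_mul_self_eq_of_pos (by positivity), ← sq, mul_pow, mul_pow, mul_pow,
    sq_sqrt hA.le, sq_sqrt hβ.le, mul_rpow (by norm_num) hY.le, ← rpow_mul_natCast hY.le]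
  push_cast
  ring_nf

lemma exists_norm_sum_e_mul_rpow_le_of_pos {c κ : ℝ} (hc : 1 < c) (hc' : c ≤ 2) (hκ : 0 < κ)
    (hκ' : κ ≤ 1) :
    ∃ C > 0, ∀ (β : ℝ) (q : ℕ) (Y : ℝ) (S : Finset ℕ), 0 < β → 0 < q → (q : ℝ) ≤ Y →
      IsProgressionSegment q S → (∀ m ∈ S, κ * Y < m ∧ m ≤ Y) →
      ‖∑ m ∈ S, e (β * (m : ℝ) ^ c)‖ ≤
        C * (√β * Y ^ (c / 2) + Y ^ (1 - c / 2) / (q * √β)) := by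
  set A : ℝ := c * (c - 1) * 3 ^ (c - 2)
  set h : ℝ := (κ / 3) ^ (c - 2)
  have hA0 : 0 < A := mul_pos (mul_pos (by linarith) (by linarith)) (by positivity)
  refine ⟨10 * h * (2 * √A + 1 / √A), by positivity, fun β q Y S hβ hq hqY hseg hS => ?_⟩
  have hq' : (0 : ℝ) < q := by exact_mod_cast hq
  have hY : 0 < Y := hq'.trans_le hqY
  rcases S.eq_empty_or_nonempty with rfl | hne
  · simpa using by positivity
  obtain ⟨s, K, hs, hK, hsum⟩ := hseg.exists_sum_eq_sum_range hq hne fun m => e (β * (m : ℝ) ^ c)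
  have hKY := (hS _ hK).2
  push_cast at hKY
  set lam : ℝ := β * (c * (c - 1) * q ^ 2) * (3 * Y) ^ (c - 2) with hlam
  have hsqrt : √lam = √A * √β * q * Y ^ (c / 2 - 1) := sqrt_mul_rpow_sub_two hc hβ hq' hY
  have hcount : ((K + 1 : ℕ) : ℝ) * q ≤ 2 * Y := by
    push_cast
    linarith [(Nat.cast_nonneg s : (0 : ℝ) ≤ s)]
  have hfirst : ((K + 1 : ℕ) : ℝ) * √lam ≤ 2 * √A * (√β * Y ^ (c / 2)) := by
    calc ((K + 1 : ℕ) : ℝ) * √lam = (((K + 1 : ℕ) : ℝ) * q) * (√A * √β * Y ^ (c / 2 - 1)) := by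
          rw [hsqrt]; ring
      _ ≤ (2 * Y) * (√A * √β * Y ^ (c / 2 - 1)) :=
          mul_le_mul_of_nonneg_right hcount (by positivity)
      _ = 2 * √A * (√β * Y ^ (c / 2)) := by
          rw [rpow_sub_one hY.ne']
          field_simp
  have hsecond : 1 / √lam = 1 / √A * (Y ^ (1 - c / 2) / (q * √β)) := by
    rw [hsqrt, show 1 - c / 2 = -(c / 2 - 1) by ring, rpow_neg hY.le]
    field_simp
  rw [hsum]
  calc _ ≤ 10 * h * (((K + 1 : ℕ) : ℝ) * √lam + 1 / √lam) :=
        norm_sum_range_e_mul_rpow_le hc hc' hκ hκ' hβ hq hqY (hS s hs).1 hKY hlam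
    _ ≤ 10 * h * (2 * √A * (√β * Y ^ (c / 2)) + 1 / √A * (Y ^ (1 - c / 2) / (q * √β))) := by
        rw [hsecond]
        gcongr
    _ ≤ 10 * h * ((2 * √A + 1 / √A) * (√β * Y ^ (c / 2)) +
          (2 * √A + 1 / √A) * (Y ^ (1 - c / 2) / (q * √β))) := by
        gcongr
        · exact le_add_of_nonneg_right (by positivity)
        · exact le_add_of_nonneg_left (by positivity)
    _ = _ := by ring

lemma norm_sum_e_neg_mul {ι : Type*} (S : Finset ι) (β : ℝ) (g : ι → ℝ) :
    ‖∑ m ∈ S, e (-β * g m)‖ = ‖∑ m ∈ S, e (β * g m)‖ := by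
  simp only [neg_mul, e_neg, ← map_sum, RCLike.norm_conj]

/-- A constant `C` serves in the second derivative test for `β m ^ c` along progressions in
`(κ Y, Y]`, uniformly in `β`, the progression and `Y`. -/
def IsPowerPhaseConstant (c κ C : ℝ) : Prop :=
  ∀ (β : ℝ) (q : ℕ) (Y : ℝ) (S : Finset ℕ), β ≠ 0 → 0 < q → (q : ℝ) ≤ Y →
    IsProgressionSegment q S → (∀ m ∈ S, κ * Y < m ∧ m ≤ Y) →
    ‖∑ m ∈ S, e (β * (m : ℝ) ^ c)‖ ≤
      C * (√|β| * Y ^ (c / 2) + Y ^ (1 - c / 2) / (q * √|β|))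

theorem exists_isPowerPhaseConstant {c κ : ℝ} (hc : 1 < c) (hc' : c ≤ 2) (hκ : 0 < κ)
    (hκ' : κ ≤ 1) : ∃ C > 0, IsPowerPhaseConstant c κ C := by
  obtain ⟨C, hC, h⟩ := exists_norm_sum_e_mul_rpow_le_of_pos hc hc' hκ hκ'
  refine ⟨C, hC, fun β q Y S hβ hq hqY hseg hS => ?_⟩
  rcases hβ.lt_or_gt with hneg | hpos
  · rw [abs_of_neg hneg, ← norm_sum_e_neg_mul]
    exact h (-β) q Y S (neg_pos.mpr hneg) hq hqY hseg hS
  · rw [abs_of_pos hpos]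
    exact h β q Y S hpos hq hqY hseg hS

/-! ### Odd moduli and the sieve kernel -/

lemma sum_one_div_le_one_add_log {X : ℝ} {s : Finset ℕ} (hX : 1 ≤ X)
    (hs : ∀ n ∈ s, 0 < n ∧ (n : ℝ) ≤ X) : ∑ n ∈ s, (1 : ℝ) / n ≤ 1 + log X := by
  have hsub : s ⊆ Icc 1 ⌊X⌋₊ := fun n hn => mem_Icc.mpr ⟨(hs n hn).1, Nat.le_floor (hs n hn).2⟩
  calc ∑ n ∈ s, (1 : ℝ) / n ≤ ∑ n ∈ Icc 1 ⌊X⌋₊, (1 : ℝ) / n :=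
        sum_le_sum_of_subset_of_nonneg hsub fun _ _ _ => by positivity
    _ = harmonic ⌊X⌋₊ := by simp [harmonic_eq_sum_Icc]
    _ ≤ 1 + log X := harmonic_floor_le_one_add_log X hX

lemma modEq_of_odd_of_dvd_mul_add_two {d m x y : ℕ} (hd : Odd d) (hx : d ∣ m * x + 2)
    (hy : d ∣ m * y + 2) : x ≡ y [MOD d] := by
  have hcop : d.Coprime m := by
    have hdvd : d.gcd m ∣ 2 := (Nat.dvd_add_right ((Nat.gcd_dvd_right d m).mul_right x)).mp
      ((Nat.gcd_dvd_left d m).trans hx)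
    exact Nat.Coprime.eq_one_of_dvd
      ((Nat.coprime_two_right.mpr hd).coprime_dvd_left (Nat.gcd_dvd_left d m)) hdvd
  refine Nat.ModEq.cancel_left_of_coprime hcop (Nat.ModEq.add_right_cancel' 2 ?_)
  exact ((Nat.modEq_zero_iff_dvd).mpr hx).trans ((Nat.modEq_zero_iff_dvd).mpr hy).symm

lemma isProgressionSegment_filter_mul {d : ℕ} (hd : Odd d) (m : ℕ) {s I : Finset ℕ}
    (hs : (s : Set ℕ).OrdConnected) (hI : (I : Set ℕ).OrdConnected) :
    IsProgressionSegment d {l ∈ s | m * l ∈ I ∧ d ∣ m * l + 2} := by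
  refine ⟨fun x hx y hy => ?_, fun x hx z hz y hxy hyz hmod => ?_⟩
  · exact modEq_of_odd_of_dvd_mul_add_two hd (mem_filter.mp hx).2.2 (mem_filter.mp hy).2.2
  · rw [mem_filter] at hx hz ⊢
    refine ⟨hs.out hx.1 hz.1 ⟨hxy, hyz⟩,
      hI.out hx.2.1 hz.2.1 ⟨Nat.mul_le_mul_left m hxy, Nat.mul_le_mul_left m hyz⟩, ?_⟩
    exact (((hmod.mul_left m).add_right 2).dvd_iff dvd_rfl).mpr hx.2.2

lemma IsProgressionSegment.inter {q r : ℕ} {S T : Finset ℕ} (hS : IsProgressionSegment q S)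
    (hT : IsProgressionSegment r T) : IsProgressionSegment (q.lcm r) (S ∩ T) := by
  refine ⟨fun x hx y hy => ?_, fun x hx z hz y hxy hyz hmod => ?_⟩
  · rw [mem_inter] at hx hy
    exact Nat.mod_lcm (hS.1 x hx.1 y hy.1) (hT.1 x hx.2 y hy.2)
  · rw [mem_inter] at hx hz ⊢
    exact ⟨hS.2 x hx.1 z hz.1 y hxy hyz (hmod.of_dvd (Nat.dvd_lcm_left q r)),
      hT.2 x hx.2 z hz.2 y hxy hyz (hmod.of_dvd (Nat.dvd_lcm_right q r))⟩

lemma mem_Ioc_floor {a b : ℝ} (ha : 0 ≤ a) (hb : 0 ≤ b) {n : ℕ} :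
    n ∈ Ioc ⌊a⌋₊ ⌊b⌋₊ ↔ a < n ∧ (n : ℝ) ≤ b := by
  rw [mem_Ioc, Nat.floor_lt ha, Nat.le_floor_iff hb]

lemma card_le_of_forall_pos_le {Y : ℝ} (hY : 0 ≤ Y) {s : Finset ℕ}
    (hs : ∀ n ∈ s, 0 < n ∧ (n : ℝ) ≤ Y) : (#s : ℝ) ≤ Y := by
  have hsub : s ⊆ Ioc 0 ⌊Y⌋₊ := fun n hn => mem_Ioc.mpr ⟨(hs n hn).1, Nat.le_floor (hs n hn).2⟩
  exact (Nat.le_floor_iff hY).mp ((card_le_card hsub).trans (Nat.card_Ioc _ _).le)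

/-- The odd moduli up to `D`; sieve weights are supported on them. -/
noncomputable def oddModuli (D : ℝ) : Finset ℕ := {d ∈ Ioc 0 ⌊D⌋₊ | Odd d}

section OddModuli

variable {D : ℝ} {d : ℕ}

lemma mem_oddModuli (hD : 0 ≤ D) : d ∈ oddModuli D ↔ (0 < d ∧ (d : ℝ) ≤ D) ∧ Odd d := by
  rw [oddModuli, mem_filter, mem_Ioc, Nat.le_floor_iff hD]

lemma card_oddModuli_le (hD : 0 ≤ D) : (#(oddModuli D) : ℝ) ≤ D :=
  card_le_of_forall_pos_le hD fun _ hd => ((mem_oddModuli hD).mp hd).1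

lemma sum_oddModuli_one_div_le {X : ℝ} (hD : 1 ≤ D) (hDX : D ≤ X) :
    ∑ d ∈ oddModuli D, (1 : ℝ) / d ≤ 1 + log X :=
  sum_one_div_le_one_add_log (hD.trans hDX) fun _ hd =>
    have hmem := ((mem_oddModuli (by linarith)).mp hd).1
    ⟨hmem.1, hmem.2.trans hDX⟩

end OddModuli

/-- The kernel `K(n) = ∑_{d ∣ n + 2} λ(d) e(α n ^ c)`, over odd `d ≤ D`, for `mu X < n ≤ X`, and
`K(n) = 0` for all other `n`. As it depends on the product `n` only, the bilinear forms with
coefficients `K(m l)` are symmetric in `m` and `l`. -/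
noncomputable def sieveKernel (c mu α X D : ℝ) (lam : ℕ → ℝ) (n : ℕ) : ℂ :=
  ∑ d ∈ oddModuli D,
    if n ∈ Ioc ⌊mu * X⌋₊ ⌊X⌋₊ ∧ d ∣ n + 2 then (lam d : ℂ) * e (α * (n : ℝ) ^ c) else 0

lemma sieveKernel_eq_zero (c α : ℝ) {mu X : ℝ} (D : ℝ) (lam : ℕ → ℝ) {n : ℕ}
    (hn : n ∉ Ioc ⌊mu * X⌋₊ ⌊X⌋₊) : sieveKernel c mu α X D lam n = 0 := by
  simp [sieveKernel, hn]

lemma norm_sieveKernel_le (c mu α X : ℝ) {D : ℝ} (hD : 0 ≤ D) {lam : ℕ → ℝ}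
    (hlam : ∀ d, |lam d| ≤ 1) (n : ℕ) : ‖sieveKernel c mu α X D lam n‖ ≤ D := by
  refine (norm_sum_le_of_le (oddModuli D) (n := fun _ => (1 : ℝ)) fun d _ => ?_).trans ?_
  · split_ifs
    · simpa [norm_e] using hlam d
    · simp
  · simpa using card_oddModuli_le hD

/-! ### Type I sums -/

lemma norm_sum_mul_le_of_monotone {b : ℕ → ℝ} (hb : Monotone b) (hb0 : 0 ≤ b 0) {S : Finset ℕ}
    {N : ℕ} (hS : ∀ l ∈ S, l ≤ N) {z : ℕ → ℂ} {K : ℝ}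
    (hK : ∀ j, ‖∑ l ∈ S with j ≤ l, z l‖ ≤ K) : ‖∑ l ∈ S, (b l : ℂ) * z l‖ ≤ b N * K := by
  have htele (l : ℕ) (hl : l ∈ S) :
      b l = b 0 + ∑ j ∈ range N, if j + 1 ≤ l then b (j + 1) - b j else 0 := by
    have hrange : {j ∈ range N | j + 1 ≤ l} = range l := by
      ext j
      have := hS l hl
      simp only [mem_filter, mem_range]
      omega
    rw [← sum_filter, hrange, sum_range_sub b, add_sub_cancel]
  have habel : ∑ l ∈ S, (b l : ℂ) * z l = b 0 * ∑ l ∈ S with 0 ≤ l, z l +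
      ∑ j ∈ range N, (b (j + 1) - b j : ℂ) * ∑ l ∈ S with j + 1 ≤ l, z l := by
    simp only [zero_le, filter_true, mul_sum, sum_filter]
    rw [sum_comm, ← sum_add_distrib]
    refine sum_congr rfl fun l hl => ?_
    rw [htele l hl]
    push_cast
    rw [add_mul, sum_mul]
    congr 1
    exact sum_congr rfl fun j _ => by split_ifs <;> simp
  have hterm (w : ℝ) (hw : 0 ≤ w) (j : ℕ) : ‖(w : ℂ) * ∑ l ∈ S with j ≤ l, z l‖ ≤ w * K := by
    rw [norm_mul, Complex.norm_of_nonneg hw]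
    exact mul_le_mul_of_nonneg_left (hK j) hw
  rw [habel]
  calc _ ≤ b 0 * K + ∑ j ∈ range N, (b (j + 1) - b j) * K := by
        refine norm_add_le_of_le (hterm _ hb0 0) (norm_sum_le_of_le _ fun j _ => ?_)
        exact_mod_cast hterm _ (sub_nonneg.mpr (hb j.le_succ)) (j + 1)
    _ = b N * K := by
        rw [← sum_mul, sum_range_sub]
        ring

section TypeI

variable {c mu α X D C : ℝ}

lemma norm_sum_filter_e_mul_rpow_le (hC : IsPowerPhaseConstant c mu C) (hmu : 0 ≤ mu) (hX : 0 < X)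
    (hα : α ≠ 0) {d m : ℕ} (hd : Odd d) (hm : 0 < m) (hdm : (d * m : ℝ) ≤ X) (j : ℕ) :
    ‖∑ l ∈ Ioc 0 ⌊X⌋₊ with (m * l ∈ Ioc ⌊mu * X⌋₊ ⌊X⌋₊ ∧ d ∣ m * l + 2) ∧ j ≤ l,
        e (α * ((m * l : ℕ) : ℝ) ^ c)‖ ≤
      C * (√|α| * X ^ (c / 2) + 1 / m * (1 / d) * (X ^ (1 - c / 2) / √|α|)) := by
  have hm' : (0 : ℝ) < m := by exact_mod_cast hm
  have hseg : IsProgressionSegment d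
      {l ∈ Ioc 0 ⌊X⌋₊ | (m * l ∈ Ioc ⌊mu * X⌋₊ ⌊X⌋₊ ∧ d ∣ m * l + 2) ∧ j ≤ l} := by
    rw [← filter_filter]
    exact (isProgressionSegment_filter_mul hd m (by simpa using Set.ordConnected_Ioc)
      (by simpa using Set.ordConnected_Ioc)).filter_ge j
  have hphase := hC (α * (m : ℝ) ^ c) d (X / m) _ (mul_ne_zero hα (by positivity)) hd.pos
    ((le_div_iff₀ hm').mpr hdm) hseg fun l hl => by
      have hmem := (mem_Ioc_floor (by positivity) hX.le).mp (mem_filter.mp hl).2.1.1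
      push_cast at hmem
      rw [← mul_div_assoc, div_lt_iff₀' hm', le_div_iff₀' hm']
      exact hmem
  have hsqrt : √|α * (m : ℝ) ^ c| = √|α| * (m : ℝ) ^ (c / 2) := by
    rw [abs_mul, sqrt_mul (abs_nonneg α), abs_of_pos (by positivity : 0 < (m : ℝ) ^ c),
      sqrt_eq_rpow ((m : ℝ) ^ c), ← rpow_mul hm'.le, mul_one_div]
  have hsplit : (m : ℝ) ^ (1 - c / 2) = m / (m : ℝ) ^ (c / 2) := by rw [rpow_sub hm', rpow_one]
  rw [hsqrt, div_rpow hX.le hm'.le, div_rpow hX.le hm'.le, hsplit] at hphase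
  convert hphase using 2
  · exact sum_congr rfl fun l _ => by
      rw [Nat.cast_mul, mul_rpow hm'.le l.cast_nonneg, mul_assoc]
  · field_simp

lemma norm_sum_filter_mul_e_mul_rpow_le (hC : IsPowerPhaseConstant c mu C) (hmu : 0 ≤ mu)
    (hX : 0 < X) (hα : α ≠ 0) {d m : ℕ} (hd : Odd d) (hm : 0 < m) (hdm : (d * m : ℝ) ≤ X)
    {b : ℕ → ℝ} (hb : Monotone b) (hb0 : 0 ≤ b 0) :
    ‖∑ l ∈ Ioc 0 ⌊X⌋₊ with m * l ∈ Ioc ⌊mu * X⌋₊ ⌊X⌋₊ ∧ d ∣ m * l + 2,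
        (b l : ℂ) * e (α * ((m * l : ℕ) : ℝ) ^ c)‖ ≤
      b ⌊X⌋₊ * (C * (√|α| * X ^ (c / 2) + 1 / m * (1 / d) * (X ^ (1 - c / 2) / √|α|))) := by
  refine norm_sum_mul_le_of_monotone hb hb0
    (fun l hl => (mem_Ioc.mp (mem_filter.mp hl).1).2) fun j => ?_
  rw [filter_filter]
  exact norm_sum_filter_e_mul_rpow_le hC hmu hX hα hd hm hdm j

lemma sum_mul_sum_mul_sieveKernel_eq (lam : ℕ → ℝ) (Ms Ls : Finset ℕ) (a b : ℕ → ℝ) :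
    ∑ m ∈ Ms, (a m : ℂ) * ∑ l ∈ Ls, (b l : ℂ) * sieveKernel c mu α X D lam (m * l) =
      ∑ d ∈ oddModuli D, ∑ m ∈ Ms, ((lam d * a m : ℝ) : ℂ) *
        ∑ l ∈ Ls with m * l ∈ Ioc ⌊mu * X⌋₊ ⌊X⌋₊ ∧ d ∣ m * l + 2,
          (b l : ℂ) * e (α * ((m * l : ℕ) : ℝ) ^ c) := by
  rw [sum_comm]
  refine sum_congr rfl fun m _ => ?_
  simp only [sieveKernel, mul_sum, sum_filter]
  rw [sum_comm]
  refine sum_congr rfl fun d _ => sum_congr rfl fun l _ => ?_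
  split_ifs
  · push_cast
    ring
  · simp

theorem norm_typeI_le (hC : IsPowerPhaseConstant c mu C) (hC0 : 0 ≤ C) (hmu : 0 ≤ mu)
    {R A : ℝ} (hD : 1 ≤ D) (hR : 1 ≤ R) (hDR : D * R ≤ X) (hα : α ≠ 0) {lam : ℕ → ℝ}
    (hlam : ∀ d, |lam d| ≤ 1) {Ms : Finset ℕ} (hMs : ∀ m ∈ Ms, 0 < m ∧ (m : ℝ) ≤ R)
    {a b : ℕ → ℝ} (ha : ∀ m ∈ Ms, |a m| ≤ A) (hA : 0 ≤ A) (hb : Monotone b) (hb0 : 0 ≤ b 0) :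
    ‖∑ m ∈ Ms, (a m : ℂ) *
        ∑ l ∈ Ioc 0 ⌊X⌋₊, (b l : ℂ) * sieveKernel c mu α X D lam (m * l)‖ ≤
      C * (A * b ⌊X⌋₊) * (D * R * (√|α| * X ^ (c / 2)) +
        (1 + log X) ^ 2 * (X ^ (1 - c / 2) / √|α|)) := by
  have hDX : D ≤ X := by nlinarith
  have hRX : R ≤ X := by nlinarith
  have hX : 0 < X := by linarith
  have hlog : 0 ≤ log X := log_nonneg (by linarith)
  have hbX : 0 ≤ b ⌊X⌋₊ := hb0.trans (hb (Nat.zero_le _))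
  have hMsX : ∀ m ∈ Ms, 0 < m ∧ (m : ℝ) ≤ X := fun m hm => ⟨(hMs m hm).1, (hMs m hm).2.trans hRX⟩
  have hcardMs : (#Ms : ℝ) ≤ R := card_le_of_forall_pos_le (by linarith) hMs
  have hcoeff (d m : ℕ) (hm : m ∈ Ms) : ‖((lam d * a m : ℝ) : ℂ)‖ ≤ A := by
    rw [Complex.norm_real, norm_eq_abs, abs_mul]
    exact (mul_le_of_le_one_left (abs_nonneg _) (hlam d)).trans (ha m hm)
  rw [sum_mul_sum_mul_sieveKernel_eq]
  calc _ ≤ ∑ d ∈ oddModuli D, ∑ m ∈ Ms, A * (b ⌊X⌋₊ * (C * (√|α| * X ^ (c / 2) +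
          1 / m * (1 / d) * (X ^ (1 - c / 2) / √|α|)))) := by
        refine norm_sum_le_of_le _ fun d hd => norm_sum_le_of_le _ fun m hm => ?_
        obtain ⟨⟨-, hdD⟩, hodd⟩ := (mem_oddModuli (by linarith)).mp hd
        have hdm : (d * m : ℝ) ≤ X :=
          (mul_le_mul hdD (hMs m hm).2 m.cast_nonneg (by linarith)).trans hDR
        rw [norm_mul]
        exact mul_le_mul (hcoeff d m hm) (norm_sum_filter_mul_e_mul_rpow_le hC hmu hX hα hodd
          (hMs m hm).1 hdm hb hb0) (norm_nonneg _) hA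
    _ = C * (A * b ⌊X⌋₊) * (#(oddModuli D) * #Ms * (√|α| * X ^ (c / 2)) +
          ((∑ d ∈ oddModuli D, (1 : ℝ) / d) * ∑ m ∈ Ms, (1 : ℝ) / m) *
            (X ^ (1 - c / 2) / √|α|)) := by
        rw [sum_mul_sum]
        simp only [← mul_sum, sum_add_distrib, sum_const, nsmul_eq_mul, ← sum_mul]
        ring
    _ ≤ _ := by
        rw [sq (1 + log X)]
        gcongr
        · exact card_oddModuli_le (by linarith)
        · exact sum_oddModuli_one_div_le hD hDX
        · exact sum_one_div_le_one_add_log (by linarith) hMsX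

end TypeI

/-! ### Correlations over short windows -/

lemma norm_sum_mul_sum_sq_le {ι ι' : Type*} {s : Finset ι} (W : Finset ι') {a : ι → ℂ}
    (ha : ∀ m ∈ s, ‖a m‖ ≤ 1) (v : ι' → ι → ℂ) :
    ‖∑ m ∈ s, a m * ∑ l ∈ W, v l m‖ ^ 2 ≤
      #s * ∑ x ∈ W, ∑ y ∈ W, ‖∑ m ∈ s, v x m * conj (v y m)‖ := by
  have hexpand : ((∑ m ∈ s, ‖∑ l ∈ W, v l m‖ ^ 2 : ℝ) : ℂ) =
      ∑ x ∈ W, ∑ y ∈ W, ∑ m ∈ s, v x m * conj (v y m) := by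
    push_cast
    simp_rw [← Complex.mul_conj', map_sum, sum_mul_sum]
    rw [sum_comm]
    exact sum_congr rfl fun x _ => sum_comm
  calc ‖∑ m ∈ s, a m * ∑ l ∈ W, v l m‖ ^ 2 ≤ (∑ m ∈ s, ‖∑ l ∈ W, v l m‖) ^ 2 := by
        gcongr
        refine norm_sum_le_of_le _ fun m hm => ?_
        rw [norm_mul]
        exact mul_le_of_le_one_left (norm_nonneg _) (ha m hm)
    _ ≤ #s * ∑ m ∈ s, ‖∑ l ∈ W, v l m‖ ^ 2 := sq_sum_le_card_mul_sum_sq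
    _ = #s * ‖((∑ m ∈ s, ‖∑ l ∈ W, v l m‖ ^ 2 : ℝ) : ℂ)‖ := by
        rw [Complex.norm_of_nonneg (by positivity)]
    _ ≤ _ := by
        rw [hexpand]
        gcongr
        exact norm_sum_le_of_le _ fun x _ => norm_sum_le _ _

lemma sum_range_one_div_sqrt_le (n : ℕ) : ∑ k ∈ range n, 1 / √((k + 1 : ℕ) : ℝ) ≤ 2 * √n := by
  induction n with
  | zero => simp
  | succ n ih =>
    have hn : √(n : ℝ) ^ 2 = n := sq_sqrt n.cast_nonneg
    have hn1 : √((n + 1 : ℕ) : ℝ) ^ 2 = n + 1 := by rw [sq_sqrt (Nat.cast_nonneg _), Nat.cast_succ]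
    have hpos : 0 < √((n + 1 : ℕ) : ℝ) := by positivity
    have hstep : 1 / √((n + 1 : ℕ) : ℝ) ≤ 2 * √((n + 1 : ℕ) : ℝ) - 2 * √n := by
      rw [div_le_iff₀ hpos]
      nlinarith [sq_nonneg (√((n + 1 : ℕ) : ℝ) - √n)]
    rw [sum_range_succ]
    linarith

lemma sum_one_div_sqrt_le_of_injOn {s : Finset ℕ} {H : ℕ} {f : ℕ → ℕ} (hf : Set.InjOn f s)
    (hpos : ∀ y ∈ s, 0 < f y) (hlt : ∀ y ∈ s, f y ≤ H) : ∑ y ∈ s, 1 / √(f y : ℝ) ≤ 2 * √H := by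
  calc ∑ y ∈ s, 1 / √(f y : ℝ) = ∑ k ∈ s.image f, 1 / √(k : ℝ) :=
        (sum_image (f := fun k : ℕ => 1 / √(k : ℝ)) hf).symm
    _ ≤ ∑ k ∈ (range H).image Nat.succ, 1 / √(k : ℝ) := by
        refine sum_le_sum_of_subset_of_nonneg (fun k hk => ?_) fun _ _ _ => by positivity
        obtain ⟨y, hy, rfl⟩ := mem_image.mp hk
        have := hpos y hy
        have := hlt y hy
        exact mem_image.mpr ⟨f y - 1, mem_range.mpr (by omega), by omega⟩
    _ = ∑ k ∈ range H, 1 / √((k + 1 : ℕ) : ℝ) := sum_image Nat.succ_injective.injOn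
    _ ≤ 2 * √H := sum_range_one_div_sqrt_le H

section Window

variable {W : Finset ℕ} {t H : ℕ}

lemma abs_sub_le_of_mem_window (hW : W ⊆ Ico t (t + H)) {x y : ℕ} (hx : x ∈ W) (hy : y ∈ W) :
    |(x : ℝ) - y| ≤ H := by
  have hx' := mem_Ico.mp (hW hx)
  have hy' := mem_Ico.mp (hW hy)
  have hxy : x ≤ y + H ∧ y ≤ x + H := by omega
  rw [abs_sub_le_iff, sub_le_iff_le_add', sub_le_iff_le_add']
  exact_mod_cast hxy

lemma sum_erase_one_div_sqrt_abs_sub_le (hW : W ⊆ Ico t (t + H)) {x : ℕ} (hx : x ∈ W) :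
    ∑ y ∈ W.erase x, 1 / √|(x : ℝ) - y| ≤ 4 * √H := by
  have hmem (y : ℕ) (hy : y ∈ W) : x ≤ y + H ∧ y ≤ x + H := by
    have := mem_Ico.mp (hW hx)
    have := mem_Ico.mp (hW hy)
    omega
  have hlow : ∑ y ∈ W with y < x, 1 / √|(x : ℝ) - y| ≤ 2 * √H := by
    rw [sum_congr rfl fun y hy => by rw [← Nat.cast_sub (mem_filter.mp hy).2.le, Nat.abs_cast]]
    refine sum_one_div_sqrt_le_of_injOn (fun y hy z hz h => ?_) (fun y hy => ?_) fun y hy => ?_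
    · simp only [coe_filter, Set.mem_ofPred_eq] at hy hz h
      omega
    · exact Nat.sub_pos_of_lt (mem_filter.mp hy).2
    · have := hmem y (mem_filter.mp hy).1
      omega
  have hhigh : ∑ y ∈ W with x < y, 1 / √|(x : ℝ) - y| ≤ 2 * √H := by
    rw [sum_congr rfl fun y hy => by
      rw [abs_sub_comm, ← Nat.cast_sub (mem_filter.mp hy).2.le, Nat.abs_cast]]
    refine sum_one_div_sqrt_le_of_injOn (fun y hy z hz h => ?_) (fun y hy => ?_) fun y hy => ?_
    · simp only [coe_filter, Set.mem_ofPred_eq] at hy hz h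
      omega
    · exact Nat.sub_pos_of_lt (mem_filter.mp hy).2
    · have := hmem y (mem_filter.mp hy).1
      omega
  have hsplit : W.erase x = {y ∈ W | y < x} ∪ {y ∈ W | x < y} := by
    ext y
    simp only [mem_erase, mem_union, mem_filter, ne_iff_lt_or_gt]
    tauto
  have hdisj : Disjoint {y ∈ W | y < x} {y ∈ W | x < y} :=
    disjoint_filter.mpr fun y _ h => h.le.not_gt
  rw [hsplit, sum_union hdisj]
  linarith

lemma sum_sum_le_of_window {F : ℕ → ℕ → ℝ} {G U V : ℝ} (hG : 0 ≤ G) (hU : 0 ≤ U) (hV : 0 ≤ V)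
    (hW : W ⊆ Ico t (t + H)) (hdiag : ∀ x ∈ W, F x x ≤ G)
    (hoff : ∀ x ∈ W, ∀ y ∈ W, x ≠ y → F x y ≤ U * √|(x : ℝ) - y| + V / √|(x : ℝ) - y|) :
    ∑ x ∈ W, ∑ y ∈ W, F x y ≤ H * (G + U * (H * √H) + V * (4 * √H)) := by
  have hcard : (#W : ℝ) ≤ H := by exact_mod_cast (card_le_card hW).trans (by simp)
  have hrow (x : ℕ) (hx : x ∈ W) : ∑ y ∈ W, F x y ≤ G + U * (H * √H) + V * (4 * √H) := by
    calc ∑ y ∈ W, F x y = F x x + ∑ y ∈ W.erase x, F x y := (add_sum_erase _ _ hx).symm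
      _ ≤ G + ∑ y ∈ W.erase x, (U * √H + V * (1 / √|(x : ℝ) - y|)) := by
          refine add_le_add (hdiag x hx) (sum_le_sum fun y hy => ?_)
          obtain ⟨hne, hyW⟩ := mem_erase.mp hy
          refine (hoff x hx y hyW hne.symm).trans ?_
          rw [← mul_one_div V]
          gcongr
          exact abs_sub_le_of_mem_window hW hx hyW
      _ = G + U * (#(W.erase x) * √H) + V * ∑ y ∈ W.erase x, 1 / √|(x : ℝ) - y| := by
          rw [sum_add_distrib, sum_const, nsmul_eq_mul, ← mul_sum]
          ring
      _ ≤ _ := by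
          gcongr
          · exact card_erase_le.trans (by exact_mod_cast hcard)
          · exact sum_erase_one_div_sqrt_abs_sub_le hW hx
  calc _ ≤ ∑ _x ∈ W, (G + U * (H * √H) + V * (4 * √H)) := sum_le_sum hrow
    _ = #W * (G + U * (H * √H) + V * (4 * √H)) := by rw [sum_const, nsmul_eq_mul]
    _ ≤ _ := by gcongr

end Window

lemma norm_sum_sq_le_sum_windows {L : Finset ℕ} {Q : ℝ} {H : ℕ} (hH : 0 < H) (hHQ : (H : ℝ) ≤ Q)
    (hL : ∀ l ∈ L, (l : ℝ) ≤ Q) (f : ℕ → ℂ) {K : ℝ} (hK : 0 ≤ K)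
    (hwin : ∀ k, ‖∑ l ∈ L with l / H = k, f l‖ ^ 2 ≤ K) :
    ‖∑ l ∈ L, f l‖ ^ 2 ≤ (2 * Q / H) ^ 2 * K := by
  have hH' : (0 : ℝ) < H := by exact_mod_cast hH
  have hmaps : ∀ l ∈ L, l / H ∈ range (⌊Q⌋₊ / H + 1) := fun l hl =>
    mem_range.mpr (Nat.lt_succ_of_le (Nat.div_le_div_right (Nat.le_floor (hL l hl))))
  have hcount : ((⌊Q⌋₊ / H + 1 : ℕ) : ℝ) ≤ 2 * Q / H := by
    have hdiv : ((⌊Q⌋₊ / H : ℕ) : ℝ) ≤ Q / H :=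
      Nat.cast_div_le.trans (by gcongr; exact Nat.floor_le (by linarith))
    have hone : 1 ≤ Q / H := (one_le_div hH').mpr hHQ
    push_cast
    linarith [mul_div_assoc 2 Q (H : ℝ)]
  calc ‖∑ l ∈ L, f l‖ ^ 2
      = ‖∑ k ∈ range (⌊Q⌋₊ / H + 1), ∑ l ∈ L with l / H = k, f l‖ ^ 2 := by
        rw [sum_fiberwise_of_maps_to hmaps]
    _ ≤ (∑ k ∈ range (⌊Q⌋₊ / H + 1), ‖∑ l ∈ L with l / H = k, f l‖) ^ 2 := by
        gcongr
        exact norm_sum_le _ _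
    _ ≤ (⌊Q⌋₊ / H + 1 : ℕ) * ∑ k ∈ range (⌊Q⌋₊ / H + 1), ‖∑ l ∈ L with l / H = k, f l‖ ^ 2 := by
        simpa using sq_sum_le_card_mul_sum_sq
          (s := range (⌊Q⌋₊ / H + 1)) (f := fun k => ‖∑ l ∈ L with l / H = k, f l‖)
    _ ≤ (⌊Q⌋₊ / H + 1 : ℕ) * ((⌊Q⌋₊ / H + 1 : ℕ) * K) := by
        gcongr
        simpa using sum_le_card_nsmul (range (⌊Q⌋₊ / H + 1)) _ K fun k _ => hwin k
    _ ≤ 2 * Q / H * (2 * Q / H * K) :=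
        mul_le_mul hcount (by gcongr) (by positivity) ((Nat.cast_nonneg _).trans hcount)
    _ = _ := by ring

/-- Cauchy–Schwarz is applied on each window of `H` consecutive values of `l` separately, which
trades the diagonal terms for smaller shifts `x - y`. -/
lemma norm_bilinear_sq_le_of_correlation {ι : Type*} {s : Finset ι} {L : Finset ℕ} {a : ι → ℂ}
    (ha : ∀ m ∈ s, ‖a m‖ ≤ 1) (v : ℕ → ι → ℂ) {Q G U V : ℝ} (hG : 0 ≤ G) (hU : 0 ≤ U)
    (hV : 0 ≤ V) {H : ℕ} (hH : 0 < H) (hHQ : (H : ℝ) ≤ Q) (hL : ∀ l ∈ L, (l : ℝ) ≤ Q)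
    (hdiag : ∀ x ∈ L, ‖∑ m ∈ s, v x m * conj (v x m)‖ ≤ G)
    (hoff : ∀ x ∈ L, ∀ y ∈ L, x ≠ y → ‖∑ m ∈ s, v x m * conj (v y m)‖ ≤
      U * √|(x : ℝ) - y| + V / √|(x : ℝ) - y|) :
    ‖∑ m ∈ s, a m * ∑ l ∈ L, v l m‖ ^ 2 ≤
      (2 * Q / H) ^ 2 * (#s * (H * (G + U * (H * √H) + V * (4 * √H)))) := by
  simp_rw [mul_sum]
  rw [sum_comm]
  refine norm_sum_sq_le_sum_windows hH hHQ hL _ (by positivity) fun k => ?_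
  have hsub : {l ∈ L | l / H = k} ⊆ Ico (k * H) (k * H + H) := fun l hl => by
    rw [mem_Ico, ← (mem_filter.mp hl).2]
    exact ⟨Nat.div_mul_le_self l H, Nat.lt_div_mul_add hH⟩
  rw [sum_comm]
  simp_rw [← mul_sum]
  refine (norm_sum_mul_sum_sq_le _ ha v).trans ?_
  gcongr
  exact sum_sum_le_of_window hG hU hV hsub (fun x hx => hdiag x (mem_filter.mp hx).1)
    fun x hx y hy => hoff x (mem_filter.mp hx).1 y (mem_filter.mp hy).1

/-! ### Correlations of the sieve kernel -/

lemma one_div_lcm_eq {d₁ d₂ : ℕ} (h₁ : 0 < d₁) (h₂ : 0 < d₂) :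
    (1 : ℝ) / d₁.lcm d₂ =
      1 / d₁.gcd d₂ * (1 / (d₁ / d₁.gcd d₂ : ℕ) * (1 / (d₂ / d₁.gcd d₂ : ℕ))) := by
  have hg : (d₁.gcd d₂ : ℝ) ≠ 0 := by exact_mod_cast (Nat.gcd_pos_of_pos_left d₂ h₁).ne'
  have hlcm : (d₁.gcd d₂ * d₁.lcm d₂ : ℝ) = d₁ * d₂ := by exact_mod_cast Nat.gcd_mul_lcm d₁ d₂
  have h₁' : (d₁ : ℝ) ≠ 0 := by exact_mod_cast h₁.ne'
  have h₂' : (d₂ : ℝ) ≠ 0 := by exact_mod_cast h₂.ne'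
  rw [Nat.cast_div (Nat.gcd_dvd_left _ _) hg, Nat.cast_div (Nat.gcd_dvd_right _ _) hg,
    (eq_div_iff hg).mpr ((mul_comm _ _).trans hlcm)]
  field_simp

lemma sum_sum_one_div_lcm_le {X : ℝ} {s : Finset ℕ} (hX : 1 ≤ X)
    (hs : ∀ d ∈ s, 0 < d ∧ (d : ℝ) ≤ X) :
    ∑ d₁ ∈ s, ∑ d₂ ∈ s, (1 : ℝ) / d₁.lcm d₂ ≤ (1 + log X) ^ 3 := by
  set T := Ioc 0 ⌊X⌋₊ with hT
  have hmem (n : ℕ) : n ∈ T ↔ 0 < n ∧ (n : ℝ) ≤ X := by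
    rw [hT, mem_Ioc, Nat.le_floor_iff (by linarith)]
  let split : ℕ × ℕ → ℕ × ℕ × ℕ := fun p => (p.1.gcd p.2, p.1 / p.1.gcd p.2, p.2 / p.1.gcd p.2)
  have hinj : Function.Injective split := fun p q h => by
    simp only [split, Prod.mk.injEq] at h
    refine Prod.ext ?_ ?_
    · rw [← Nat.div_mul_cancel (Nat.gcd_dvd_left p.1 p.2), h.2.1, h.1,
        Nat.div_mul_cancel (Nat.gcd_dvd_left q.1 q.2)]
    · rw [← Nat.div_mul_cancel (Nat.gcd_dvd_right p.1 p.2), h.2.2, h.1,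
        Nat.div_mul_cancel (Nat.gcd_dvd_right q.1 q.2)]
  have hmaps (p : ℕ × ℕ) (hp : p ∈ s ×ˢ s) : split p ∈ T ×ˢ T ×ˢ T := by
    obtain ⟨⟨h₁, h₁X⟩, h₂, h₂X⟩ := And.imp (hs _) (hs _) (mem_product.mp hp)
    have hg := Nat.gcd_pos_of_pos_left p.2 h₁
    simp only [split, mem_product, hmem]
    refine ⟨⟨hg, le_trans ?_ h₁X⟩, ⟨Nat.div_gcd_pos_of_pos_left _ h₁, le_trans ?_ h₁X⟩,
      Nat.div_gcd_pos_of_pos_right _ h₂, le_trans ?_ h₂X⟩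
    · exact_mod_cast Nat.gcd_le_left _ h₁
    · exact_mod_cast Nat.div_le_self _ _
    · exact_mod_cast Nat.div_le_self _ _
  calc ∑ d₁ ∈ s, ∑ d₂ ∈ s, (1 : ℝ) / d₁.lcm d₂
      = ∑ t ∈ (s ×ˢ s).image split, (1 : ℝ) / t.1 * (1 / t.2.1 * (1 / t.2.2)) := by
        rw [sum_image hinj.injOn, ← sum_product']
        refine sum_congr rfl fun p hp => ?_
        obtain ⟨h₁, h₂⟩ := mem_product.mp hp
        exact one_div_lcm_eq (hs _ h₁).1 (hs _ h₂).1
    _ ≤ ∑ t ∈ T ×ˢ T ×ˢ T, (1 : ℝ) / t.1 * (1 / t.2.1 * (1 / t.2.2)) :=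
        sum_le_sum_of_subset_of_nonneg (image_subset_iff.mpr hmaps) fun _ _ _ => by positivity
    _ = (∑ t ∈ T, (1 : ℝ) / t) ^ 3 := by
        rw [pow_three, sum_mul_sum, sum_mul_sum, sum_product]
        simp_rw [sum_product, mul_sum]
    _ ≤ (1 + log X) ^ 3 := by
        gcongr
        exact sum_one_div_le_one_add_log hX fun n hn => (hmem n).mp hn

section Correlation

variable {c mu α X D P : ℝ} {lam : ℕ → ℝ} {Ms : Finset ℕ}

lemma sum_sieveKernel_mul_conj_eq (Ms : Finset ℕ) (x y : ℕ) :
    ∑ m ∈ Ms, sieveKernel c mu α X D lam (x * m) * conj (sieveKernel c mu α X D lam (y * m)) =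
      ∑ d₁ ∈ oddModuli D, ∑ d₂ ∈ oddModuli D, ((lam d₁ * lam d₂ : ℝ) : ℂ) *
        ∑ m ∈ Ms with (x * m ∈ Ioc ⌊mu * X⌋₊ ⌊X⌋₊ ∧ d₁ ∣ x * m + 2) ∧
            (y * m ∈ Ioc ⌊mu * X⌋₊ ⌊X⌋₊ ∧ d₂ ∣ y * m + 2),
          e (α * ((x : ℝ) ^ c - (y : ℝ) ^ c) * (m : ℝ) ^ c) := by
  have hphase (m : ℕ) : e (α * ((x : ℝ) ^ c - (y : ℝ) ^ c) * (m : ℝ) ^ c) =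
      e (α * ((x * m : ℕ) : ℝ) ^ c) * conj (e (α * ((y * m : ℕ) : ℝ) ^ c)) := by
    rw [← e_neg, ← e_add, Nat.cast_mul, Nat.cast_mul, mul_rpow x.cast_nonneg m.cast_nonneg,
      mul_rpow y.cast_nonneg m.cast_nonneg]
    congr 1
    ring
  simp_rw [sieveKernel, map_sum, sum_mul_sum, mul_sum, sum_filter]
  rw [sum_comm]
  refine sum_congr rfl fun d₁ _ => ?_
  rw [sum_comm]
  refine sum_congr rfl fun d₂ _ => sum_congr rfl fun m _ => ?_
  rw [hphase]
  by_cases hx : x * m ∈ Ioc ⌊mu * X⌋₊ ⌊X⌋₊ ∧ d₁ ∣ x * m + 2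
  · by_cases hy : y * m ∈ Ioc ⌊mu * X⌋₊ ⌊X⌋₊ ∧ d₂ ∣ y * m + 2
    · rw [if_pos hx, if_pos hy, if_pos ⟨hx, hy⟩, map_mul, Complex.conj_ofReal]
      push_cast
      ring
    · rw [if_neg hy, if_neg (mt And.right hy), map_zero, mul_zero]
  · rw [if_neg hx, if_neg (mt And.left hx), zero_mul]

lemma norm_sum_sieveKernel_mul_conj_le_of_forall (hD : 1 ≤ D) (hDX : D ≤ X)
    (hlam : ∀ d, |lam d| ≤ 1) {x y : ℕ} {A B : ℝ} (hA : 0 ≤ A) (hB : 0 ≤ B)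
    (h : ∀ d₁ ∈ oddModuli D, ∀ d₂ ∈ oddModuli D,
      ‖∑ m ∈ Ms with (x * m ∈ Ioc ⌊mu * X⌋₊ ⌊X⌋₊ ∧ d₁ ∣ x * m + 2) ∧
          (y * m ∈ Ioc ⌊mu * X⌋₊ ⌊X⌋₊ ∧ d₂ ∣ y * m + 2),
        e (α * ((x : ℝ) ^ c - (y : ℝ) ^ c) * (m : ℝ) ^ c)‖ ≤ A + B * (1 / d₁.lcm d₂)) :
    ‖∑ m ∈ Ms, sieveKernel c mu α X D lam (x * m) *
        conj (sieveKernel c mu α X D lam (y * m))‖ ≤ D ^ 2 * A + (1 + log X) ^ 3 * B := by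
  have hcoeff (d₁ d₂ : ℕ) : ‖((lam d₁ * lam d₂ : ℝ) : ℂ)‖ ≤ 1 := by
    rw [Complex.norm_real, norm_eq_abs, abs_mul]
    exact mul_le_one₀ (hlam d₁) (abs_nonneg _) (hlam d₂)
  rw [sum_sieveKernel_mul_conj_eq]
  calc _ ≤ ∑ d₁ ∈ oddModuli D, ∑ d₂ ∈ oddModuli D, (A + B * (1 / d₁.lcm d₂)) := by
        refine norm_sum_le_of_le _ fun d₁ h₁ => norm_sum_le_of_le _ fun d₂ h₂ => ?_
        rw [norm_mul]
        exact (mul_le_of_le_one_left (norm_nonneg _) (hcoeff d₁ d₂)).trans (h d₁ h₁ d₂ h₂)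
    _ = (#(oddModuli D) : ℝ) ^ 2 * A +
          (∑ d₁ ∈ oddModuli D, ∑ d₂ ∈ oddModuli D, (1 : ℝ) / d₁.lcm d₂) * B := by
        simp only [sum_add_distrib, ← mul_sum, sum_const, nsmul_eq_mul]
        ring
    _ ≤ _ := by
        gcongr
        · exact card_oddModuli_le (by linarith)
        · refine sum_sum_one_div_lcm_le (hD.trans hDX) fun d hd => ?_
          obtain ⟨⟨hpos, hdD⟩, -⟩ := (mem_oddModuli (by linarith)).mp hd
          exact ⟨hpos, hdD.trans hDX⟩

lemma isProgressionSegment_filter_mul_and (hMs : (Ms : Set ℕ).OrdConnected) {d₁ d₂ : ℕ}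
    (h₁ : Odd d₁) (h₂ : Odd d₂) (x y a b : ℕ) :
    IsProgressionSegment (d₁.lcm d₂) {m ∈ Ms | (x * m ∈ Ioc a b ∧ d₁ ∣ x * m + 2) ∧
      (y * m ∈ Ioc a b ∧ d₂ ∣ y * m + 2)} := by
  have hI : (Ioc a b : Set ℕ).OrdConnected := by simpa using Set.ordConnected_Ioc
  rw [filter_and]
  exact (isProgressionSegment_filter_mul h₁ x hMs hI).inter
    (isProgressionSegment_filter_mul h₂ y hMs hI)

lemma norm_sum_sieveKernel_mul_conj_le_trivial (hD : 1 ≤ D) (hDX : D ≤ X) (hDP : D ^ 2 ≤ P)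
    (hlam : ∀ d, |lam d| ≤ 1) (hMs : (Ms : Set ℕ).OrdConnected)
    (hMsP : ∀ m ∈ Ms, (m : ℝ) ≤ P) (x y : ℕ) :
    ‖∑ m ∈ Ms, sieveKernel c mu α X D lam (x * m) *
        conj (sieveKernel c mu α X D lam (y * m))‖ ≤ 2 * (1 + log X) ^ 3 * P := by
  have hP : 0 ≤ P := (sq_nonneg D).trans hDP
  have hlog : 0 ≤ log X := log_nonneg (hD.trans hDX)
  refine (norm_sum_sieveKernel_mul_conj_le_of_forall (A := 1) hD hDX hlam zero_le_one hP
    fun d₁ h₁ d₂ h₂ => ?_).trans ?_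
  · rw [mem_oddModuli (by linarith)] at h₁ h₂
    refine (norm_sum_e_le_card _ _).trans ?_
    rw [mul_one_div, add_comm]
    exact (isProgressionSegment_filter_mul_and hMs h₁.2 h₂.2 x y _ _).card_le
      (Nat.lcm_pos h₁.1.1 h₂.1.1) hP fun m hm => hMsP m (mem_filter.mp hm).1
  · have : 1 * P ≤ (1 + log X) ^ 3 * P := by
      gcongr
      exact one_le_pow₀ (by linarith)
    linarith

lemma norm_sum_sieveKernel_mul_conj_le (hD : 1 ≤ D) (hDX : D ≤ X) (hDP : D ^ 2 ≤ P)
    (hlam : ∀ d, |lam d| ≤ 1) (hMs : (Ms : Set ℕ).OrdConnected) {κ C : ℝ}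
    (hC : IsPowerPhaseConstant c κ C) (hC0 : 0 ≤ C)
    (hMsP : ∀ m ∈ Ms, κ * P < m ∧ (m : ℝ) ≤ P) {x y : ℕ} {β : ℝ} (hβ : β ≠ 0)
    (hβ' : β = α * ((x : ℝ) ^ c - (y : ℝ) ^ c)) :
    ‖∑ m ∈ Ms, sieveKernel c mu α X D lam (x * m) *
        conj (sieveKernel c mu α X D lam (y * m))‖ ≤
      D ^ 2 * (C * (√|β| * P ^ (c / 2))) + (1 + log X) ^ 3 * (C * (P ^ (1 - c / 2) / √|β|)) := by
  have hP : 0 ≤ P := (sq_nonneg D).trans hDP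
  refine norm_sum_sieveKernel_mul_conj_le_of_forall hD hDX hlam (by positivity) (by positivity)
    fun d₁ h₁ d₂ h₂ => ?_
  rw [mem_oddModuli (by linarith)] at h₁ h₂
  have hlcm : ((d₁.lcm d₂ : ℕ) : ℝ) ≤ P := by
    calc ((d₁.lcm d₂ : ℕ) : ℝ) ≤ d₁ * d₂ := by
          exact_mod_cast Nat.le_of_dvd (Nat.mul_pos h₁.1.1 h₂.1.1) (Nat.lcm_dvd_mul d₁ d₂)
      _ ≤ D * D := mul_le_mul h₁.1.2 h₂.1.2 (Nat.cast_nonneg _) (by linarith)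
      _ ≤ P := by rwa [← sq]
  rw [← hβ']
  refine (hC β _ P _ hβ (Nat.lcm_pos h₁.1.1 h₂.1.1) hlcm
    (isProgressionSegment_filter_mul_and hMs h₁.2 h₂.2 x y _ _)
    fun m hm => hMsP m (mem_filter.mp hm).1).trans_eq ?_
  rw [mul_add, mul_assoc C, div_mul_div_comm, mul_one, mul_comm (√|β|) (Nat.cast _)]

end Correlation

/-! ### Type II sums over a block -/

lemma abs_rpow_sub_rpow_mem_Icc {c κ Q x y : ℝ} (hc : 1 ≤ c) (hκ : 0 < κ) (hQ : 0 < Q)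
    (hx : x ∈ Set.Ioc (κ * Q) Q) (hy : y ∈ Set.Ioc (κ * Q) Q) :
    |x ^ c - y ^ c| ∈ Set.Icc (c * (κ ^ (c - 1) * Q ^ (c - 1)) * |x - y|)
      (c * Q ^ (c - 1) * |x - y|) := by
  have hκQ : 0 < κ * Q := by positivity
  wlog hxy : x < y generalizing x y
  · rcases (not_lt.mp hxy).eq_or_lt with rfl | hyx
    · simp
    · rw [abs_sub_comm (x ^ c), abs_sub_comm x]
      exact this hy hx hyx
  obtain ⟨u, hu, hdiff⟩ := exists_rpow_sub_rpow_eq c (hκQ.trans hx.1) hxy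
  have hu₀ : κ * Q ≤ u := (hx.1.trans hu.1).le
  have hu₁ : u ≤ Q := hu.2.le.trans hy.2
  have hu_pos : 0 < u := hκQ.trans_le hu₀
  rw [abs_sub_comm (x ^ c), abs_sub_comm x, hdiff, abs_mul,
    abs_of_pos (by positivity : 0 < c * u ^ (c - 1)), ← mul_rpow hκ.le hQ.le]
  refine ⟨?_, ?_⟩ <;> gcongr

lemma sqrt_abs_mul_rpow_sub_rpow_mem_Icc {c κ Q x y : ℝ} (α : ℝ) (hc : 1 ≤ c) (hκ : 0 < κ)
    (hQ : 0 < Q) (hx : x ∈ Set.Ioc (κ * Q) Q) (hy : y ∈ Set.Ioc (κ * Q) Q) :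
    √|α * (x ^ c - y ^ c)| ∈ Set.Icc (√(c * κ ^ (c - 1)) * (√|α| * Q ^ ((c - 1) / 2)) * √|x - y|)
      (√c * (√|α| * Q ^ ((c - 1) / 2)) * √|x - y|) := by
  obtain ⟨hlow, hupp⟩ := abs_rpow_sub_rpow_mem_Icc hc hκ hQ hx hy
  have hroot : Q ^ ((c - 1) / 2) = √(Q ^ (c - 1)) := by
    rw [sqrt_eq_rpow, ← rpow_mul hQ.le, mul_one_div]
  have hfactor (k : ℝ) (hk : 0 ≤ k) : √k * (√|α| * Q ^ ((c - 1) / 2)) * √|x - y| =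
      √(|α| * (k * Q ^ (c - 1) * |x - y|)) := by
    rw [hroot, sqrt_mul (abs_nonneg α), sqrt_mul (by positivity), sqrt_mul hk]
    ring
  rw [hfactor _ (by positivity), hfactor _ (by positivity), abs_mul, mul_assoc c]
  exact ⟨by gcongr, by gcongr⟩

section Block

variable {c mu κ α X D P Q C : ℝ} {lam : ℕ → ℝ} {Ms Ls : Finset ℕ} {H : ℕ}

lemma norm_sum_sieveKernel_mul_conj_le_sqrt_abs_sub (hC : IsPowerPhaseConstant c κ C)
    (hC0 : 0 ≤ C) (hc : 1 ≤ c) (hκ : 0 < κ) (hα : α ≠ 0) (hQ : 0 < Q) (hD : 1 ≤ D) (hDX : D ≤ X)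
    (hDP : D ^ 2 ≤ P) (hlam : ∀ d, |lam d| ≤ 1) (hMs : (Ms : Set ℕ).OrdConnected)
    (hMsP : ∀ m ∈ Ms, κ * P < m ∧ (m : ℝ) ≤ P) {x y : ℕ} (hx : (x : ℝ) ∈ Set.Ioc (κ * Q) Q)
    (hy : (y : ℝ) ∈ Set.Ioc (κ * Q) Q) (hxy : x ≠ y) :
    ‖∑ m ∈ Ms, sieveKernel c mu α X D lam (x * m) *
        conj (sieveKernel c mu α X D lam (y * m))‖ ≤
      D ^ 2 * (C * (√c * (√|α| * Q ^ ((c - 1) / 2)) * P ^ (c / 2))) * √|(x : ℝ) - y| +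
        (1 + log X) ^ 3 * (C * (P ^ (1 - c / 2) /
          (√(c * κ ^ (c - 1)) * (√|α| * Q ^ ((c - 1) / 2))))) / √|(x : ℝ) - y| := by
  obtain ⟨hlow, hupp⟩ := sqrt_abs_mul_rpow_sub_rpow_mem_Icc α hc hκ hQ hx hy
  have hP : 0 ≤ P := (sq_nonneg D).trans hDP
  have hlog : 0 ≤ log X := log_nonneg (hD.trans hDX)
  have hα' : 0 < |α| := abs_pos.mpr hα
  have hdist : 0 < |(x : ℝ) - y| := abs_pos.mpr (sub_ne_zero.mpr (by exact_mod_cast hxy))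
  have hlow_pos : 0 < √(c * κ ^ (c - 1)) * (√|α| * Q ^ ((c - 1) / 2)) * √|(x : ℝ) - y| := by
    positivity
  have hβ : α * ((x : ℝ) ^ c - (y : ℝ) ^ c) ≠ 0 := fun h => by
    rw [h, abs_zero, sqrt_zero] at hlow
    exact hlow_pos.not_ge hlow
  refine (norm_sum_sieveKernel_mul_conj_le hD hDX hDP hlam hMs hC hC0 hMsP hβ rfl).trans ?_
  rw [mul_div_assoc, mul_div_assoc C, div_div]
  refine add_le_add ?_ (by gcongr)
  calc _ ≤ D ^ 2 * (C * (√c * (√|α| * Q ^ ((c - 1) / 2)) * √|(x : ℝ) - y| * P ^ (c / 2))) := by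
        gcongr
    _ = _ := by ring

lemma block_terms_eq {h : ℝ} (c L a C₁ C₂ D : ℝ) (hP : 0 < P) (hQ : 0 < Q) (hh : 0 < h) :
    (2 * Q / h) ^ 2 * (P * (h * (2 * L * P +
        D ^ 2 * (C * (C₁ * (a * Q ^ ((c - 1) / 2)) * P ^ (c / 2))) * (h * √h) +
        L * (C * (P ^ (1 - c / 2) / (C₂ * (a * Q ^ ((c - 1) / 2))))) * (4 * √h)))) =
      8 * (L * ((P * Q) ^ 2 / h)) +
        4 * C * C₁ * (D ^ 2 * a * √h * ((P * Q) ^ (1 + c / 2) * √Q)) +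
        16 * C / C₂ * (L * ((P * Q) ^ (2 - c / 2) * √Q / (a * √h))) := by
  have hU : P * P ^ (c / 2) * (Q ^ 2 * Q ^ ((c - 1) / 2)) = (P * Q) ^ (1 + c / 2) * √Q := by
    rw [sqrt_eq_rpow, mul_rpow hP.le hQ.le, rpow_add hP, rpow_one, mul_assoc (P * P ^ (c / 2)),
      ← rpow_add hQ, ← rpow_natCast, ← rpow_add hQ]
    congr 2
    push_cast
    ring
  have hV : P * P ^ (1 - c / 2) * (Q ^ 2 / Q ^ ((c - 1) / 2)) = (P * Q) ^ (2 - c / 2) * √Q := by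
    rw [sqrt_eq_rpow, mul_rpow hP.le hQ.le, mul_assoc (P ^ (2 - c / 2)), ← rpow_add hQ,
      ← rpow_natCast, ← rpow_sub hQ]
    nth_rewrite 1 [← rpow_one P]
    rw [← rpow_add hP]
    congr 2 <;> (push_cast; ring)
  have hsq : h = √h ^ 2 := (sq_sqrt hh.le).symm
  have hh' : 0 < √h := sqrt_pos.mpr hh
  have : 0 < Q ^ ((c - 1) / 2) := rpow_pos_of_pos hQ _
  rw [← hU, ← hV]
  generalize √h = r at *
  subst hsq
  field_simp
  ring

lemma norm_sum_mul_mul_conj_le {ι : Type*} {u v : ℂ} (hu : ‖u‖ ≤ 1) (hv : ‖v‖ ≤ 1)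
    (s : Finset ι) (f g : ι → ℂ) :
    ‖∑ m ∈ s, (u * f m) * conj (v * g m)‖ ≤ ‖∑ m ∈ s, f m * conj (g m)‖ := by
  have hpull : ∑ m ∈ s, (u * f m) * conj (v * g m) = u * conj v * ∑ m ∈ s, f m * conj (g m) := by
    rw [mul_sum]
    exact sum_congr rfl fun m _ => by rw [map_mul]; ring
  rw [hpull, norm_mul, norm_mul, RCLike.norm_conj]
  exact mul_le_of_le_one_left (norm_nonneg _) (mul_le_one₀ hu (norm_nonneg _) hv)

lemma add_add_le_mul_add_add {k₁ k₂ k₃ t₁ t₂ t₃ : ℝ} (hk₁ : 0 ≤ k₁) (hk₂ : 0 ≤ k₂) (hk₃ : 0 ≤ k₃)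
    (ht₁ : 0 ≤ t₁) (ht₂ : 0 ≤ t₂) (ht₃ : 0 ≤ t₃) :
    k₁ * t₁ + k₂ * t₂ + k₃ * t₃ ≤ (k₁ + k₂ + k₃) * (t₁ + t₂ + t₃) := by
  calc k₁ * t₁ + k₂ * t₂ + k₃ * t₃
      ≤ k₁ * (t₁ + t₂ + t₃) + k₂ * (t₁ + t₂ + t₃) + k₃ * (t₁ + t₂ + t₃) := by
        gcongr <;> linarith
    _ = _ := by ring

lemma norm_block_sq_le_trivial (hQ : 0 ≤ Q) (hD : 1 ≤ D) (hDX : D ≤ X) (hDP : D ^ 2 ≤ P)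
    (hlam : ∀ d, |lam d| ≤ 1) (hMs : (Ms : Set ℕ).OrdConnected)
    (hMsP : ∀ m ∈ Ms, 0 < m ∧ (m : ℝ) ≤ P) (hLsQ : ∀ l ∈ Ls, 0 < l ∧ (l : ℝ) ≤ Q)
    {a b : ℕ → ℝ} (ha : ∀ m ∈ Ms, |a m| ≤ 1) (hb : ∀ l ∈ Ls, |b l| ≤ 1) :
    ‖∑ m ∈ Ms, (a m : ℂ) * ∑ l ∈ Ls, (b l : ℂ) * sieveKernel c mu α X D lam (l * m)‖ ^ 2 ≤
      2 * (1 + log X) ^ 3 * (P * Q) ^ 2 := by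
  have hP : 0 ≤ P := (sq_nonneg D).trans hDP
  have hlog : 0 ≤ log X := log_nonneg (hD.trans hDX)
  have hcoeff {s : Finset ℕ} {f : ℕ → ℝ} (hf : ∀ n ∈ s, |f n| ≤ 1) (n : ℕ) (hn : n ∈ s) :
      ‖(f n : ℂ)‖ ≤ 1 := (Complex.norm_real _).trans_le (hf n hn)
  calc _ ≤ (#Ms : ℝ) * ∑ x ∈ Ls, ∑ y ∈ Ls, 2 * (1 + log X) ^ 3 * P := by
        refine (norm_sum_mul_sum_sq_le Ls (hcoeff ha) _).trans ?_
        gcongr with x hx y hy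
        exact (norm_sum_mul_mul_conj_le (hcoeff hb x hx) (hcoeff hb y hy) ..).trans
          (norm_sum_sieveKernel_mul_conj_le_trivial hD hDX hDP hlam hMs
            (fun m hm => (hMsP m hm).2) x y)
    _ = #Ms * (#Ls * (#Ls * (2 * (1 + log X) ^ 3 * P))) := by simp only [sum_const, nsmul_eq_mul]
    _ ≤ P * (Q * (Q * (2 * (1 + log X) ^ 3 * P))) := by
        gcongr
        · exact card_le_of_forall_pos_le hP hMsP
        all_goals exact card_le_of_forall_pos_le hQ hLsQ
    _ = _ := by ring

/-- The implied constant of the Type II estimate over a block, in terms of a constant `C` for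
`IsPowerPhaseConstant c κ`. -/
noncomputable def blockConstant (c κ C : ℝ) : ℝ := 8 + 4 * C * √c + 16 * C / √(c * κ ^ (c - 1))

lemma eight_le_blockConstant (c : ℝ) (hC0 : 0 ≤ C) : 8 ≤ blockConstant c κ C := by
  rw [blockConstant, add_assoc]
  exact le_add_of_nonneg_right (by positivity)

/-- `H` is the length of the windows in the `l`-variable on which Cauchy–Schwarz is applied. -/
theorem norm_block_sq_le (hC : IsPowerPhaseConstant c κ C)
    (hC0 : 0 ≤ C) (hc : 1 ≤ c) (hκ : 0 < κ) (hα : α ≠ 0) (hQ : 0 < Q) (hD : 1 ≤ D) (hDX : D ≤ X)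
    (hDP : D ^ 2 ≤ P) (hlam : ∀ d, |lam d| ≤ 1) (hMs : (Ms : Set ℕ).OrdConnected)
    (hMsP : ∀ m ∈ Ms, κ * P < m ∧ (m : ℝ) ≤ P) (hLsQ : ∀ l ∈ Ls, κ * Q < l ∧ (l : ℝ) ≤ Q)
    (hH : 0 < H) (hHQ : (H : ℝ) ≤ Q) {a b : ℕ → ℝ} (ha : ∀ m ∈ Ms, |a m| ≤ 1)
    (hb : ∀ l ∈ Ls, |b l| ≤ 1) :
    ‖∑ m ∈ Ms, (a m : ℂ) * ∑ l ∈ Ls, (b l : ℂ) * sieveKernel c mu α X D lam (l * m)‖ ^ 2 ≤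
      blockConstant c κ C * (1 + log X) ^ 3 * ((P * Q) ^ 2 / H +
        D ^ 2 * √|α| * √H * ((P * Q) ^ (1 + c / 2) * √Q) +
        (P * Q) ^ (2 - c / 2) * √Q / (√|α| * √H)) := by
  have hP : 0 < P := by nlinarith
  have hlog : 0 ≤ log X := log_nonneg (hD.trans hDX)
  have hL : 1 ≤ (1 + log X) ^ 3 := one_le_pow₀ (by linarith)
  have hcard : (#Ms : ℝ) ≤ P := card_le_of_forall_pos_le hP.le fun m hm =>
    ⟨by exact_mod_cast (by positivity : 0 ≤ κ * P).trans_lt (hMsP m hm).1, (hMsP m hm).2⟩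
  have hb' (l : ℕ) (hl : l ∈ Ls) : ‖(b l : ℂ)‖ ≤ 1 :=
    (Complex.norm_real _).trans_le (hb l hl)
  refine (norm_bilinear_sq_le_of_correlation (a := fun m => (a m : ℂ)) (fun m hm => ?_)
    (fun l m => (b l : ℂ) * sieveKernel c mu α X D lam (l * m)) (by positivity) ?_ ?_ hH hHQ
    (fun l hl => (hLsQ l hl).2)
    (fun x hx => (norm_sum_mul_mul_conj_le (hb' x hx) (hb' x hx) ..).trans
      (norm_sum_sieveKernel_mul_conj_le_trivial hD hDX hDP hlam hMs
        (fun m hm => (hMsP m hm).2) x x))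
    (fun x hx y hy hxy => (norm_sum_mul_mul_conj_le (hb' x hx) (hb' y hy) ..).trans
      (norm_sum_sieveKernel_mul_conj_le_sqrt_abs_sub hC hC0 hc hκ hα hQ hD hDX hDP hlam hMs hMsP
        (hLsQ x hx) (hLsQ y hy) hxy))).trans ?_
  · simpa using ha m hm
  · positivity
  · positivity
  calc _ ≤ (2 * Q / H) ^ 2 * (P * (H * (2 * (1 + log X) ^ 3 * P +
        D ^ 2 * (C * (√c * (√|α| * Q ^ ((c - 1) / 2)) * P ^ (c / 2))) * (H * √H) +
        (1 + log X) ^ 3 * (C * (P ^ (1 - c / 2) /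
          (√(c * κ ^ (c - 1)) * (√|α| * Q ^ ((c - 1) / 2))))) * (4 * √H)))) := by gcongr
    _ ≤ _ := (block_terms_eq c _ _ _ _ D hP hQ (by positivity)).le
    _ ≤ 8 * ((1 + log X) ^ 3 * ((P * Q) ^ 2 / H)) + 4 * C * √c *
          ((1 + log X) ^ 3 * (D ^ 2 * √|α| * √H * ((P * Q) ^ (1 + c / 2) * √Q))) +
        16 * C / √(c * κ ^ (c - 1)) *
          ((1 + log X) ^ 3 * ((P * Q) ^ (2 - c / 2) * √Q / (√|α| * √H))) := by
        gcongr ?_ + _ * ?_ + ?_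
        · rfl
        · exact le_mul_of_one_le_left (by positivity) hL
        · rfl
    _ ≤ _ := add_add_le_mul_add_add (by norm_num) (by positivity) (by positivity) (by positivity)
          (by positivity) (by positivity)
    _ = _ := by rw [blockConstant]; ring

end Block

section TypeIIBound

variable {c Y D A Q H : ℝ}

/-- The bound, up to logarithms, for Type II sums of length `Y` with frequency `|α| = A`: the
minimum over the window length `H` of `norm_block_sq_le`, with `Y ^ (1 / 3) ≪ Q ≪ Y ^ (1 / 2)`. -/
noncomputable def typeIIBound (c Y D A : ℝ) : ℝ :=
  Y ^ (3 / 4 + c / 6) * D ^ (2 / 3 : ℝ) * A ^ (1 / 6 : ℝ) + Y ^ (5 / 6 : ℝ) +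
    Y ^ (1 - c / 6) * D ^ (1 / 3 : ℝ) * A ^ (-1 / 6 : ℝ) + Y ^ (1 - c / 4) * A ^ (-1 / 4 : ℝ)

/-- The window length that balances the first two terms of `norm_block_sq_le` when
`Q = Y ^ (1 / 2)`. -/
noncomputable def optimalWindow (c Y D A : ℝ) : ℝ :=
  Y ^ (1 / 2 - c / 3) * D ^ (-4 / 3 : ℝ) * A ^ (-1 / 3 : ℝ)

lemma optimalWindow_pos (c : ℝ) (hY : 0 < Y) (hD : 0 < D) (hA : 0 < A) :
    0 < optimalWindow c Y D A := by
  unfold optimalWindow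
  positivity

lemma sq_div_optimalWindow (c : ℝ) (hY : 0 < Y) (hD : 0 < D) (hA : 0 < A) :
    Y ^ 2 / optimalWindow c Y D A =
      (Y ^ (3 / 4 + c / 6) * D ^ (2 / 3 : ℝ) * A ^ (1 / 6 : ℝ)) ^ 2 := by
  rw [optimalWindow, ← exp_log hY, ← exp_log hD, ← exp_log hA]
  simp only [← exp_mul, ← exp_add, ← exp_sub, ← exp_nat_mul]
  ring_nf

lemma mul_sqrt_optimalWindow (c : ℝ) (hY : 0 < Y) (hD : 0 < D) (hA : 0 < A) :
    D ^ 2 * √A * √(optimalWindow c Y D A) * (Y ^ (1 + c / 2) * Y ^ (1 / 4 : ℝ)) =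
      (Y ^ (3 / 4 + c / 6) * D ^ (2 / 3 : ℝ) * A ^ (1 / 6 : ℝ)) ^ 2 := by
  rw [optimalWindow, ← exp_log hY, ← exp_log hD, ← exp_log hA]
  simp only [sqrt_eq_rpow, ← exp_mul, ← exp_add, ← exp_nat_mul]
  ring_nf

lemma div_sqrt_optimalWindow (c : ℝ) (hY : 0 < Y) (hD : 0 < D) (hA : 0 < A) :
    Y ^ (2 - c / 2) / √A * (Y ^ (1 / 4 : ℝ) / √(optimalWindow c Y D A)) =
      (Y ^ (1 - c / 6) * D ^ (1 / 3 : ℝ) * A ^ (-1 / 6 : ℝ)) ^ 2 := by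
  rw [optimalWindow, ← exp_log hY, ← exp_log hD, ← exp_log hA]
  simp only [sqrt_eq_rpow, ← exp_mul, ← exp_add, ← exp_sub, ← exp_nat_mul]
  ring_nf

lemma rpow_two_sub_div_sqrt (c : ℝ) (hY : 0 < Y) (hA : 0 < A) :
    Y ^ (2 - c / 2) / √A = (Y ^ (1 - c / 4) * A ^ (-1 / 4 : ℝ)) ^ 2 := by
  rw [← exp_log hY, ← exp_log hA]
  simp only [sqrt_eq_rpow, ← exp_mul, ← exp_add, ← exp_sub, ← exp_nat_mul]
  ring_nf

lemma sqrt_le_rpow_quarter (hQ : 0 ≤ Q) (hQY : Q ^ 2 ≤ Y) : √Q ≤ Y ^ (1 / 4 : ℝ) := by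
  calc √Q = (Q ^ 2) ^ (1 / 4 : ℝ) := by
        rw [sqrt_eq_rpow, ← rpow_natCast, ← rpow_mul hQ]
        norm_num
    _ ≤ Y ^ (1 / 4 : ℝ) := by gcongr

lemma one_div_le_of_min_le {x y h : ℝ} (hx : 0 < x) (hy : 0 < y) (h_min : min x y ≤ 2 * h) :
    1 / h ≤ 2 * (1 / x + 1 / y) := by
  have hmin : 0 < min x y := lt_min hx hy
  have hh : 0 < h := by linarith
  calc 1 / h ≤ 2 * (1 / min x y) := by
        rw [mul_one_div, div_le_div_iff₀ hh hmin]
        linarith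
    _ ≤ 2 * (1 / x + 1 / y) := by
        gcongr
        rcases min_choice x y with h | h <;> rw [h]
        · exact le_add_of_nonneg_right (by positivity)
        · exact le_add_of_nonneg_left (by positivity)

lemma sqrt_div_sqrt_le_of_min_le {x y h : ℝ} (hx : 0 < x) (hy : 0 < y)
    (h_min : min x y ≤ 2 * h) : √x / √h ≤ 2 * (1 + √x / √y) := by
  have hratio : x / h ≤ 2 * (1 + x / y) := by
    calc x / h = x * (1 / h) := by rw [mul_one_div]
      _ ≤ x * (2 * (1 / x + 1 / y)) := by
          gcongr
          exact one_div_le_of_min_le hx hy h_min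
      _ = 2 * (1 + x / y) := by field_simp
  rw [← sqrt_div hx.le, ← sqrt_div hx.le]
  refine sqrt_le_iff.mpr ⟨by positivity, ?_⟩
  nlinarith [sq_sqrt (by positivity : 0 ≤ x / y), sqrt_nonneg (x / y)]

lemma sq_div_window_le (hY : 0 < Y) (hD : 0 < D) (hA : 0 < A) (hQ : 0 < Q)
    (hYQ : Y ^ (1 / 3 : ℝ) ≤ 2 * Q) (hH : min Q (optimalWindow c Y D A) ≤ 2 * H) :
    Y ^ 2 / H ≤ 4 * (Y ^ (5 / 6 : ℝ)) ^ 2 +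
      2 * (Y ^ (3 / 4 + c / 6) * D ^ (2 / 3 : ℝ) * A ^ (1 / 6 : ℝ)) ^ 2 := by
  have hdiv : Y ^ 2 / Q ≤ 2 * (Y ^ (5 / 6 : ℝ)) ^ 2 := by
    have hsplit : Y ^ 2 = (Y ^ (5 / 6 : ℝ)) ^ 2 * Y ^ (1 / 3 : ℝ) := by
      rw [← rpow_natCast, ← rpow_natCast, ← rpow_mul hY.le, ← rpow_add hY]
      norm_num
    rw [div_le_iff₀ hQ, hsplit]
    nlinarith [sq_nonneg (Y ^ (5 / 6 : ℝ))]
  calc Y ^ 2 / H = Y ^ 2 * (1 / H) := by rw [mul_one_div]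
    _ ≤ Y ^ 2 * (2 * (1 / Q + 1 / optimalWindow c Y D A)) := by
        gcongr
        exact one_div_le_of_min_le hQ (optimalWindow_pos c hY hD hA) hH
    _ = 2 * (Y ^ 2 / Q) + 2 * (Y ^ 2 / optimalWindow c Y D A) := by ring
    _ ≤ _ := by
        rw [sq_div_optimalWindow c hY hD hA]
        linarith

lemma mul_sqrt_div_window_le (hY : 0 < Y) (hD : 0 < D) (hA : 0 < A) (hQ : 0 < Q)
    (hQY : Q ^ 2 ≤ Y) (hH : min Q (optimalWindow c Y D A) ≤ 2 * H) :
    Y ^ (2 - c / 2) * √Q / (√A * √H) ≤ 2 * ((Y ^ (1 - c / 4) * A ^ (-1 / 4 : ℝ)) ^ 2 +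
      (Y ^ (1 - c / 6) * D ^ (1 / 3 : ℝ) * A ^ (-1 / 6 : ℝ)) ^ 2) := by
  calc Y ^ (2 - c / 2) * √Q / (√A * √H) = Y ^ (2 - c / 2) / √A * (√Q / √H) := by
        rw [mul_div_mul_comm]
    _ ≤ Y ^ (2 - c / 2) / √A * (2 * (1 + Y ^ (1 / 4 : ℝ) / √(optimalWindow c Y D A))) := by
        gcongr
        refine (sqrt_div_sqrt_le_of_min_le hQ (optimalWindow_pos c hY hD hA) hH).trans ?_
        gcongr
        exact sqrt_le_rpow_quarter hQ.le hQY
    _ = _ := by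
        rw [← rpow_two_sub_div_sqrt c hY hA, ← div_sqrt_optimalWindow c hY hD hA]
        ring

theorem window_terms_le_typeIIBound_sq (hY : 0 < Y) (hD : 0 < D) (hA : 0 < A) (hQ : 0 < Q)
    (hQY : Q ^ 2 ≤ Y) (hYQ : Y ^ (1 / 3 : ℝ) ≤ 2 * Q)
    (hH_lower : min Q (optimalWindow c Y D A) ≤ 2 * H) (hH_upper : H ≤ optimalWindow c Y D A) :
    Y ^ 2 / H + D ^ 2 * √A * √H * (Y ^ (1 + c / 2) * √Q) + Y ^ (2 - c / 2) * √Q / (√A * √H) ≤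
      4 * typeIIBound c Y D A ^ 2 := by
  have hfirst := sq_div_window_le hY hD hA hQ hYQ hH_lower
  have hsecond : D ^ 2 * √A * √H * (Y ^ (1 + c / 2) * √Q) ≤
      (Y ^ (3 / 4 + c / 6) * D ^ (2 / 3 : ℝ) * A ^ (1 / 6 : ℝ)) ^ 2 := by
    rw [← mul_sqrt_optimalWindow c hY hD hA]
    gcongr
    exact sqrt_le_rpow_quarter hQ.le hQY
  have hthird := mul_sqrt_div_window_le hY hD hA hQ hQY hH_lower
  have hsum {u₁ u₂ u₃ u₄ : ℝ} (h₁ : 0 ≤ u₁) (h₂ : 0 ≤ u₂) (h₃ : 0 ≤ u₃) (h₄ : 0 ≤ u₄) :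
      3 * u₁ ^ 2 + 4 * u₂ ^ 2 + 2 * u₃ ^ 2 + 2 * u₄ ^ 2 ≤ 4 * (u₁ + u₂ + u₃ + u₄) ^ 2 := by
    nlinarith [mul_nonneg h₁ h₂, mul_nonneg h₁ h₃, mul_nonneg h₁ h₄, mul_nonneg h₂ h₃,
      mul_nonneg h₂ h₄, mul_nonneg h₃ h₄]
  calc _ ≤ _ := add_le_add (add_le_add hfirst hsecond) hthird
    _ = _ := by ring
    _ ≤ _ := hsum (u₁ := Y ^ (3 / 4 + c / 6) * D ^ (2 / 3 : ℝ) * A ^ (1 / 6 : ℝ))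
        (u₂ := Y ^ (5 / 6 : ℝ)) (u₃ := Y ^ (1 - c / 6) * D ^ (1 / 3 : ℝ) * A ^ (-1 / 6 : ℝ))
        (u₄ := Y ^ (1 - c / 4) * A ^ (-1 / 4 : ℝ)) (by positivity) (by positivity)
        (by positivity) (by positivity)

lemma typeIIBound_nonneg (c : ℝ) (hY : 0 ≤ Y) (hD : 0 ≤ D) (hA : 0 ≤ A) :
    0 ≤ typeIIBound c Y D A := by
  unfold typeIIBound
  positivity

lemma rpow_five_sixths_le_typeIIBound (hY : 0 ≤ Y) (hD : 0 ≤ D) (α : ℝ) :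
    Y ^ (5 / 6 : ℝ) ≤ typeIIBound c Y D |α| := by
  unfold typeIIBound
  have : 0 ≤ Y ^ (3 / 4 + c / 6) * D ^ (2 / 3 : ℝ) * |α| ^ (1 / 6 : ℝ) := by positivity
  have : 0 ≤ Y ^ (1 - c / 6) * D ^ (1 / 3 : ℝ) * |α| ^ (-1 / 6 : ℝ) := by positivity
  have : 0 ≤ Y ^ (1 - c / 4) * |α| ^ (-1 / 4 : ℝ) := by positivity
  linarith

lemma le_typeIIBound_of_optimalWindow_le_one (hY : 0 < Y) (hD : 0 < D) (hA : 0 < A)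
    (hW : optimalWindow c Y D A ≤ 1) : Y ≤ typeIIBound c Y D A := by
  have hsq : Y ^ 2 ≤ (Y ^ (3 / 4 + c / 6) * D ^ (2 / 3 : ℝ) * A ^ (1 / 6 : ℝ)) ^ 2 := by
    rw [← sq_div_optimalWindow c hY hD hA]
    exact le_div_self (sq_nonneg Y) (optimalWindow_pos c hY hD hA) hW
  refine (pow_le_pow_iff_left₀ hY.le (by positivity) two_ne_zero).mp hsq |>.trans ?_
  unfold typeIIBound
  rw [add_assoc, add_assoc]
  exact le_add_of_nonneg_right (by positivity)

lemma two_mul_rpow_le {p : ℝ} (hY : 0 ≤ Y) (hp : p ≤ 2) : (2 * Y) ^ p ≤ 4 * Y ^ p := by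
  rw [mul_rpow zero_le_two hY]
  gcongr
  calc (2 : ℝ) ^ p ≤ 2 ^ (2 : ℝ) := rpow_le_rpow_of_exponent_le one_le_two hp
    _ = 4 := by norm_num

lemma typeIIBound_two_mul_le (hc : 0 ≤ c) (hc' : c ≤ 2) (hY : 0 ≤ Y) (hD : 0 ≤ D) (hA : 0 ≤ A) :
    typeIIBound c (2 * Y) D A ≤ 4 * typeIIBound c Y D A := by
  calc typeIIBound c (2 * Y) D A ≤
        4 * Y ^ (3 / 4 + c / 6) * D ^ (2 / 3 : ℝ) * A ^ (1 / 6 : ℝ) + 4 * Y ^ (5 / 6 : ℝ) +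
          4 * Y ^ (1 - c / 6) * D ^ (1 / 3 : ℝ) * A ^ (-1 / 6 : ℝ) +
          4 * Y ^ (1 - c / 4) * A ^ (-1 / 4 : ℝ) := by
        unfold typeIIBound
        gcongr <;> exact two_mul_rpow_le hY (by linarith)
    _ = 4 * typeIIBound c Y D A := by
        unfold typeIIBound
        ring

end TypeIIBound

section Block

variable {c mu κ α X D P Q C : ℝ} {lam : ℕ → ℝ} {Ms Ls : Finset ℕ}

theorem norm_block_sq_le_typeIIBound_sq (hC : IsPowerPhaseConstant c κ C) (hC0 : 0 ≤ C)
    (hc : 1 ≤ c) (hκ : 0 < κ) (hα : α ≠ 0) (hQ : 1 ≤ Q) (hQP : Q ≤ P)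
    (hPQ : (P * Q) ^ (1 / 3 : ℝ) ≤ 2 * Q) (hD : 1 ≤ D) (hDX : D ≤ X) (hDP : D ^ 2 ≤ P)
    (hlam : ∀ d, |lam d| ≤ 1) (hMs : (Ms : Set ℕ).OrdConnected)
    (hMsP : ∀ m ∈ Ms, κ * P < m ∧ (m : ℝ) ≤ P) (hLsQ : ∀ l ∈ Ls, κ * Q < l ∧ (l : ℝ) ≤ Q)
    {a b : ℕ → ℝ} (ha : ∀ m ∈ Ms, |a m| ≤ 1) (hb : ∀ l ∈ Ls, |b l| ≤ 1) :
    ‖∑ m ∈ Ms, (a m : ℂ) * ∑ l ∈ Ls, (b l : ℂ) * sieveKernel c mu α X D lam (l * m)‖ ^ 2 ≤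
      blockConstant c κ C * (1 + log X) ^ 3 * (4 * typeIIBound c (P * Q) D |α| ^ 2) := by
  have hP0 : 0 < P := by linarith
  have hPQ0 : 0 < P * Q := by positivity
  have hD0 : 0 < D := by linarith
  have hα' : 0 < |α| := abs_pos.mpr hα
  have hL : 0 ≤ 1 + log X := add_nonneg zero_le_one (log_nonneg (hD.trans hDX))
  have hK : 8 ≤ blockConstant c κ C := eight_le_blockConstant c hC0
  rcases le_or_gt (optimalWindow c (P * Q) D |α|) 1 with hW | hW
  · have hpos {R : ℝ} (hR : 0 < R) {m : ℕ} (hm : κ * R < m) : 0 < m := by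
      exact_mod_cast (mul_pos hκ hR).trans hm
    refine (norm_block_sq_le_trivial (by linarith) hD hDX hDP hlam hMs
      (fun m hm => ⟨hpos hP0 (hMsP m hm).1, (hMsP m hm).2⟩)
      (fun l hl => ⟨hpos (by linarith) (hLsQ l hl).1, (hLsQ l hl).2⟩) ha hb).trans ?_
    have := le_typeIIBound_of_optimalWindow_le_one hPQ0 hD0 hα' hW
    gcongr ?_ * _ * ?_
    · linarith
    · nlinarith
  · set h := min Q (optimalWindow c (P * Q) D |α|)
    have hh : 1 ≤ h := le_min hQ hW.le
    have hfloor : (⌊h⌋₊ : ℝ) ≤ h := Nat.floor_le (by linarith)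
    have hfloor' : (1 : ℝ) ≤ ⌊h⌋₊ := by exact_mod_cast Nat.floor_pos.mpr hh
    refine (norm_block_sq_le hC hC0 hc hκ hα (by linarith) hD hDX hDP hlam hMs hMsP hLsQ
      (Nat.floor_pos.mpr hh) (hfloor.trans (min_le_left ..)) ha hb).trans ?_
    gcongr
    refine window_terms_le_typeIIBound_sq hPQ0 hD0 hα' (by linarith) (by nlinarith) hPQ ?_
      (hfloor.trans (min_le_right ..))
    linarith [Nat.lt_floor_add_one h]

theorem norm_block_le (hC : IsPowerPhaseConstant c κ C) (hC0 : 0 ≤ C) (hc : 1 ≤ c) (hκ : 0 < κ)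
    (hα : α ≠ 0) (hQ : 1 ≤ Q) (hQP : Q ≤ P) (hPQ : (P * Q) ^ (1 / 3 : ℝ) ≤ 2 * Q) (hD : 1 ≤ D)
    (hDX : D ≤ X) (hDP : D ^ 2 ≤ P) (hlam : ∀ d, |lam d| ≤ 1) (hMs : (Ms : Set ℕ).OrdConnected)
    (hMsP : ∀ m ∈ Ms, κ * P < m ∧ (m : ℝ) ≤ P) (hLsQ : ∀ l ∈ Ls, κ * Q < l ∧ (l : ℝ) ≤ Q)
    {a b : ℕ → ℝ} (ha : ∀ m ∈ Ms, |a m| ≤ 1) (hb : ∀ l ∈ Ls, |b l| ≤ 1) :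
    ‖∑ m ∈ Ms, (a m : ℂ) * ∑ l ∈ Ls, (b l : ℂ) * sieveKernel c mu α X D lam (l * m)‖ ≤
      blockConstant c κ C * (1 + log X) ^ 2 * typeIIBound c (P * Q) D |α| := by
  have hL : 1 ≤ 1 + log X := le_add_of_nonneg_right (log_nonneg (hD.trans hDX))
  have hK : 8 ≤ blockConstant c κ C := eight_le_blockConstant c hC0
  have hT : 0 ≤ typeIIBound c (P * Q) D |α| :=
    typeIIBound_nonneg c (by nlinarith) (by linarith) (abs_nonneg α)
  refine (pow_le_pow_iff_left₀ (norm_nonneg _) (by positivity) two_ne_zero).mp ?_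
  calc _ ≤ blockConstant c κ C * (1 + log X) ^ 3 * (4 * typeIIBound c (P * Q) D |α| ^ 2) :=
        norm_block_sq_le_typeIIBound_sq hC hC0 hc hκ hα hQ hQP hPQ hD hDX hDP hlam hMs hMsP hLsQ
          ha hb
    _ ≤ blockConstant c κ C * (1 + log X) ^ 4 *
          (blockConstant c κ C * typeIIBound c (P * Q) D |α| ^ 2) := by
        gcongr
        · norm_num
        · linarith
    _ = _ := by ring

end Block

/-! ### Type II sums -/

section TypeII

variable {c mu κ α X D P Q C : ℝ} {lam : ℕ → ℝ} {a b : ℕ → ℝ}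

lemma sq_le_of_two_mul_eq_mul (hX : 0 ≤ X) (hPQ : P * Q = 2 * X) (hQP : Q ≤ P) (hP : 0 ≤ P)
    (hD : 0 ≤ D) (hDX : D ≤ X ^ (1 / 4 : ℝ)) : D ^ 2 ≤ P := by
  have hD4 : (D ^ 2) ^ 2 ≤ X := by
    calc (D ^ 2) ^ 2 = D ^ 4 := by ring
      _ ≤ (X ^ (1 / 4 : ℝ)) ^ 4 := by gcongr
      _ = X := by
          rw [← rpow_natCast, ← rpow_mul hX]
          norm_num
  refine (pow_le_pow_iff_left₀ (sq_nonneg D) hP two_ne_zero).mp ?_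
  nlinarith

lemma two_mul_rpow_third_le (hX : 0 ≤ X) : (2 * X) ^ (1 / 3 : ℝ) ≤ 2 * X ^ (1 / 3 : ℝ) := by
  rw [mul_rpow zero_le_two hX]
  gcongr
  calc (2 : ℝ) ^ (1 / 3 : ℝ) ≤ 2 ^ (1 : ℝ) :=
        rpow_le_rpow_of_exponent_le one_le_two (by norm_num)
    _ = 2 := rpow_one 2

lemma norm_box_le (hC : IsPowerPhaseConstant c κ C) (hC0 : 0 ≤ C) (hc : 1 ≤ c) (hκ : 0 < κ)
    (hα : α ≠ 0) (hX : 1 ≤ X) (hPQ : P * Q = 2 * X) (hP : X ^ (1 / 3 : ℝ) ≤ P)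
    (hQ : X ^ (1 / 3 : ℝ) ≤ Q) (hD : 1 ≤ D) (hDX : D ≤ X ^ (1 / 4 : ℝ)) (hlam : ∀ d, |lam d| ≤ 1)
    (ha : ∀ m, |a m| ≤ 1) (hb : ∀ l, |b l| ≤ 1) :
    ‖∑ m ∈ Ioc ⌊κ * P⌋₊ ⌊P⌋₊, (a m : ℂ) * ∑ l ∈ Ioc ⌊κ * Q⌋₊ ⌊Q⌋₊,
        (b l : ℂ) * sieveKernel c mu α X D lam (m * l)‖ ≤
      blockConstant c κ C * (1 + log X) ^ 2 * typeIIBound c (2 * X) D |α| := by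
  have hX0 : 0 ≤ X := by linarith
  have hroot : 1 ≤ X ^ (1 / 3 : ℝ) := one_le_rpow hX (by norm_num)
  wlog hQP : Q ≤ P generalizing P Q a b
  · convert this (mul_comm P Q ▸ hPQ) hQ hP hb ha (le_of_not_ge hQP) using 2
    simp only [mul_sum]
    rw [sum_comm]
    exact sum_congr rfl fun l _ => sum_congr rfl fun m _ => by rw [mul_comm l m]; ring
  have hbox {R : ℝ} (hR : X ^ (1 / 3 : ℝ) ≤ R) (n : ℕ) (hn : n ∈ Ioc ⌊κ * R⌋₊ ⌊R⌋₊) :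
      κ * R < n ∧ (n : ℝ) ≤ R :=
    have hR0 : 0 ≤ R := by linarith
    (mem_Ioc_floor (by positivity) hR0).mp hn
  have hthird : (P * Q) ^ (1 / 3 : ℝ) ≤ 2 * Q :=
    hPQ ▸ (two_mul_rpow_third_le hX0).trans (by linarith)
  have hDX' : D ≤ X := hDX.trans (rpow_le_self_of_one_le hX (by norm_num))
  have := norm_block_le (mu := mu) hC hC0 hc hκ hα (hroot.trans hQ) hQP hthird hD hDX'
    (sq_le_of_two_mul_eq_mul hX0 hPQ hQP (by linarith) (by linarith) hDX) hlam
    (by rw [coe_Ioc]; exact Set.ordConnected_Ioc) (hbox hP) (hbox hQ) (fun m _ => ha m)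
    (fun l _ => hb l)
  simpa only [hPQ, mul_comm] using this

lemma log_two_eq_iff_mem_Ico {m i : ℕ} (hm : 0 < m) :
    Nat.log 2 m = i ↔ (m : ℝ) ∈ Set.Ico (2 ^ i) (2 * 2 ^ i) := by
  rw [Nat.log_eq_iff (Or.inr ⟨one_lt_two, hm.ne'⟩), pow_succ', Set.mem_Ico]
  norm_cast

lemma sum_sieveKernel_eq_sum_Ioc (hmu : 0 ≤ mu) (hX : 0 ≤ X) {m : ℕ} {p : ℝ} (hp : 1 ≤ p)
    (hm : (m : ℝ) ∈ Set.Ico p (2 * p)) :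
    ∑ l ∈ Ioc 0 ⌊X⌋₊, (b l : ℂ) * sieveKernel c mu α X D lam (m * l) =
      ∑ l ∈ Ioc ⌊mu / 4 * (X / p)⌋₊ ⌊X / p⌋₊, (b l : ℂ) * sieveKernel c mu α X D lam (m * l) := by
  have hp0 : 0 < p := by linarith
  refine (sum_subset (Ioc_subset_Ioc (Nat.zero_le _) (Nat.floor_le_floor (div_le_self hX hp)))
    fun l _ hl => ?_).symm
  rw [sieveKernel_eq_zero, mul_zero]
  contrapose! hl
  rw [mem_Ioc_floor (by positivity) hX, Nat.cast_mul] at hl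
  rw [mem_Ioc_floor (by positivity) (by positivity), ← mul_div_assoc, div_lt_iff₀ hp0,
    le_div_iff₀ hp0]
  have : (0 : ℝ) ≤ l := l.cast_nonneg
  constructor <;> nlinarith [hm.1, hm.2, mul_nonneg hmu hX]

lemma sum_dyadic_eq_box (hmu : 0 ≤ mu) (hmu' : mu ≤ 1) (hX : 0 ≤ X) {Ms : Finset ℕ}
    (hMs : ∀ m ∈ Ms, 0 < m) (i : ℕ) :
    ∑ m ∈ Ms with Nat.log 2 m = i, (a m : ℂ) * ∑ l ∈ Ioc 0 ⌊X⌋₊,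
        (b l : ℂ) * sieveKernel c mu α X D lam (m * l) =
      ∑ m ∈ Ioc ⌊mu / 4 * (2 * 2 ^ i)⌋₊ ⌊(2 * 2 ^ i : ℝ)⌋₊,
        ((if m ∈ Ms ∧ Nat.log 2 m = i then a m else 0 : ℝ) : ℂ) *
        ∑ l ∈ Ioc ⌊mu / 4 * (X / 2 ^ i)⌋₊ ⌊X / 2 ^ i⌋₊,
          (b l : ℂ) * sieveKernel c mu α X D lam (m * l) := by
  have hpow : (1 : ℝ) ≤ 2 ^ i := one_le_pow₀ one_le_two
  refine sum_subset_zero_on_sdiff (fun m hm => ?_) (fun m hm => ?_) fun m hm => ?_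
  · obtain ⟨hmMs, hlog⟩ := mem_filter.mp hm
    obtain ⟨hlow, hupp⟩ := (log_two_eq_iff_mem_Ico (hMs m hmMs)).mp hlog
    rw [mem_Ioc_floor (by positivity) (by positivity)]
    exact ⟨by nlinarith, hupp.le⟩
  · rw [if_neg (by simpa using (mem_sdiff.mp hm).2), Complex.ofReal_zero, zero_mul]
  · obtain ⟨hmMs, hlog⟩ := mem_filter.mp hm
    rw [if_pos ⟨hmMs, hlog⟩, sum_sieveKernel_eq_sum_Ioc hmu hX hpow
      ((log_two_eq_iff_mem_Ico (hMs m hmMs)).mp hlog)]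

lemma card_range_log_le (hX : 1 ≤ X) : (#(range (Nat.log 2 ⌊X⌋₊ + 1)) : ℝ) ≤ 2 * (1 + log X) := by
  have hlog2 : 1 / 2 < log 2 := by linarith [log_two_gt_d9]
  have hfloor : (1 : ℝ) ≤ ⌊X⌋₊ := by exact_mod_cast Nat.floor_pos.mpr hX
  have hlog : (Nat.log 2 ⌊X⌋₊ : ℝ) ≤ 2 * log X := by
    calc (Nat.log 2 ⌊X⌋₊ : ℝ) ≤ logb 2 ⌊X⌋₊ := natLog_le_logb _ _
      _ ≤ log X / log 2 := by
          rw [← log_div_log]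
          gcongr
          exact Nat.floor_le (by linarith)
      _ ≤ 2 * log X := by
          rw [div_le_iff₀ (by linarith)]
          nlinarith [log_nonneg hX]
  rw [card_range]
  push_cast
  linarith

lemma norm_dyadic_le (hC : IsPowerPhaseConstant c (mu / 4) C) (hC0 : 0 ≤ C) (hc : 1 ≤ c)
    (hmu : 0 < mu) (hmu' : mu ≤ 1) (hα : α ≠ 0) (hX : 1 ≤ X) (hD : 1 ≤ D)
    (hDX : D ≤ X ^ (1 / 4 : ℝ)) (hlam : ∀ d, |lam d| ≤ 1) {Ms : Finset ℕ}
    (hMs : ∀ m ∈ Ms, (m : ℝ) ∈ Set.Icc (X ^ (1 / 3 : ℝ)) (X ^ (2 / 3 : ℝ)))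
    (ha : ∀ m ∈ Ms, |a m| ≤ 1) (hb : ∀ l, |b l| ≤ 1) (i : ℕ) :
    ‖∑ m ∈ Ms with Nat.log 2 m = i, (a m : ℂ) * ∑ l ∈ Ioc 0 ⌊X⌋₊,
        (b l : ℂ) * sieveKernel c mu α X D lam (m * l)‖ ≤
      blockConstant c (mu / 4) C * (1 + log X) ^ 2 * typeIIBound c (2 * X) D |α| := by
  have hX0 : 0 < X := by linarith
  have hMs_pos (m : ℕ) (hm : m ∈ Ms) : 0 < m := by
    exact_mod_cast (rpow_pos_of_pos hX0 (1 / 3)).trans_le (hMs m hm).1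
  rcases {m ∈ Ms | Nat.log 2 m = i}.eq_empty_or_nonempty with hempty | ⟨m, hm⟩
  · rw [hempty, sum_empty, norm_zero]
    have := eight_le_blockConstant (κ := mu / 4) c hC0
    have := typeIIBound_nonneg c (by positivity : 0 ≤ 2 * X) (by linarith : 0 ≤ D) (abs_nonneg α)
    positivity
  obtain ⟨hmMs, hlog⟩ := mem_filter.mp hm
  obtain ⟨hlow, hupp⟩ := (log_two_eq_iff_mem_Ico (hMs_pos m hmMs)).mp hlog
  have hsplit : X = X ^ (1 / 3 : ℝ) * X ^ (2 / 3 : ℝ) := by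
    rw [← rpow_add hX0]
    norm_num
  rw [sum_dyadic_eq_box hmu.le hmu' hX0.le hMs_pos i]
  refine norm_box_le hC hC0 hc (by positivity) hα hX (by field_simp)
    ((hMs m hmMs).1.trans hupp.le) ?_ hD hDX hlam (fun n => ?_) hb
  · rw [le_div_iff₀ (by positivity)]
    nth_rewrite 2 [hsplit]
    gcongr
    exact hlow.trans (hMs m hmMs).2
  · split_ifs with hn
    · exact ha n hn.1
    · simp

theorem norm_typeII_le_of_abs_le_one (hC : IsPowerPhaseConstant c (mu / 4) C) (hC0 : 0 ≤ C)
    (hc : 1 ≤ c) (hc' : c ≤ 2) (hmu : 0 < mu) (hmu' : mu ≤ 1) (hα : α ≠ 0) (hX : 1 ≤ X)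
    (hD : 1 ≤ D) (hDX : D ≤ X ^ (1 / 4 : ℝ)) (hlam : ∀ d, |lam d| ≤ 1) {Ms : Finset ℕ}
    (hMs : ∀ m ∈ Ms, (m : ℝ) ∈ Set.Icc (X ^ (1 / 3 : ℝ)) (X ^ (2 / 3 : ℝ)))
    (ha : ∀ m ∈ Ms, |a m| ≤ 1) (hb : ∀ l, |b l| ≤ 1) :
    ‖∑ m ∈ Ms, (a m : ℂ) * ∑ l ∈ Ioc 0 ⌊X⌋₊,
        (b l : ℂ) * sieveKernel c mu α X D lam (m * l)‖ ≤
      8 * blockConstant c (mu / 4) C * (1 + log X) ^ 3 * typeIIBound c X D |α| := by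
  have hX0 : 0 ≤ X := by linarith
  have hL : 0 ≤ log X := log_nonneg hX
  have hK := eight_le_blockConstant (κ := mu / 4) c hC0
  have hT := typeIIBound_nonneg c (by positivity : 0 ≤ 2 * X) (by linarith : 0 ≤ D) (abs_nonneg α)
  have hlog_mem (m : ℕ) (hm : m ∈ Ms) : Nat.log 2 m ∈ range (Nat.log 2 ⌊X⌋₊ + 1) := by
    have hmX : (m : ℝ) ≤ X := (hMs m hm).2.trans (rpow_le_self_of_one_le hX (by norm_num))
    exact mem_range_succ_iff.mpr (Nat.log_mono_right (Nat.le_floor hmX))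
  rw [← sum_fiberwise_of_maps_to hlog_mem]
  calc _ ≤ ∑ _i ∈ range (Nat.log 2 ⌊X⌋₊ + 1),
        blockConstant c (mu / 4) C * (1 + log X) ^ 2 * typeIIBound c (2 * X) D |α| :=
        norm_sum_le_of_le _ fun i _ =>
          norm_dyadic_le hC hC0 hc hmu hmu' hα hX hD hDX hlam hMs ha hb i
    _ = #(range (Nat.log 2 ⌊X⌋₊ + 1)) *
          (blockConstant c (mu / 4) C * (1 + log X) ^ 2 * typeIIBound c (2 * X) D |α|) := by
        rw [sum_const, nsmul_eq_mul]
    _ ≤ 2 * (1 + log X) *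
          (blockConstant c (mu / 4) C * (1 + log X) ^ 2 * (4 * typeIIBound c X D |α|)) := by
        gcongr
        · exact card_range_log_le hX
        · exact typeIIBound_two_mul_le (by linarith) hc' hX0 (by linarith) (abs_nonneg α)
    _ = _ := by ring

theorem norm_typeII_le (hC : IsPowerPhaseConstant c (mu / 4) C) (hC0 : 0 ≤ C)
    (hc : 1 ≤ c) (hc' : c ≤ 2) (hmu : 0 < mu) (hmu' : mu ≤ 1) (hα : α ≠ 0) (hX : 1 ≤ X)
    (hD : 1 ≤ D) (hDX : D ≤ X ^ (1 / 4 : ℝ)) (hlam : ∀ d, |lam d| ≤ 1) {Ms : Finset ℕ}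
    (hMs : ∀ m ∈ Ms, (m : ℝ) ∈ Set.Icc (X ^ (1 / 3 : ℝ)) (X ^ (2 / 3 : ℝ))) {A B : ℝ}
    (hA : 0 < A) (hB : 0 < B) (ha : ∀ m ∈ Ms, |a m| ≤ A) (hb : ∀ l ∈ Ioc 0 ⌊X⌋₊, |b l| ≤ B) :
    ‖∑ m ∈ Ms, (a m : ℂ) * ∑ l ∈ Ioc 0 ⌊X⌋₊,
        (b l : ℂ) * sieveKernel c mu α X D lam (m * l)‖ ≤
      A * B * (8 * blockConstant c (mu / 4) C * (1 + log X) ^ 3 * typeIIBound c X D |α|) := by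
  have hscale : ∑ m ∈ Ms, (a m : ℂ) * ∑ l ∈ Ioc 0 ⌊X⌋₊,
        (b l : ℂ) * sieveKernel c mu α X D lam (m * l) =
      (A * B : ℝ) * ∑ m ∈ Ms, ((a m / A : ℝ) : ℂ) * ∑ l ∈ Ioc 0 ⌊X⌋₊,
        ((if l ∈ Ioc 0 ⌊X⌋₊ then b l / B else 0 : ℝ) : ℂ) *
          sieveKernel c mu α X D lam (m * l) := by
    have hA' : (A : ℂ) ≠ 0 := Complex.ofReal_ne_zero.mpr hA.ne'
    have hB' : (B : ℂ) ≠ 0 := Complex.ofReal_ne_zero.mpr hB.ne'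
    simp only [mul_sum]
    refine sum_congr rfl fun m _ => sum_congr rfl fun l hl => ?_
    rw [if_pos hl]
    push_cast
    field_simp
  rw [hscale, norm_mul, Complex.norm_of_nonneg (by positivity)]
  gcongr
  refine norm_typeII_le_of_abs_le_one hC hC0 hc hc' hmu hmu' hα hX hD hDX hlam hMs
    (fun m hm => ?_) fun l => ?_
  · rw [abs_div, abs_of_pos hA]
    exact (div_le_one hA).mpr (ha m hm)
  · split_ifs with hl
    · rw [abs_div, abs_of_pos hB]
      exact (div_le_one hB).mpr (hb l hl)
    · simp

end TypeII

/-! ### Vaughan's identity -/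

lemma sum_mul_eq_sum_sum_of_support (f g : ArithmeticFunction ℝ) {N : ℕ} {z : ℕ → ℂ}
    (hz : ∀ n, N < n → z n = 0) :
    ∑ n ∈ Ioc 0 N, ((f * g) n : ℂ) * z n =
      ∑ m ∈ Ioc 0 N, (f m : ℂ) * ∑ l ∈ Ioc 0 N, (g l : ℂ) * z (m * l) := by
  calc _ = ∑ n ∈ Ioc 0 N, ∑ p ∈ Ioc 0 N ×ˢ Ioc 0 N with p.1 * p.2 = n,
        (f p.1 : ℂ) * ((g p.2 : ℂ) * z (p.1 * p.2)) := by
        refine sum_congr rfl fun n hn => ?_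
        obtain ⟨hn0, hnN⟩ := mem_Ioc.mp hn
        rw [ArithmeticFunction.mul_apply, Nat.divisorsAntidiagonal_eq_prod_filter_of_le hn0.ne' hnN]
        push_cast
        rw [sum_mul]
        refine sum_congr rfl fun p hp => ?_
        rw [(mem_filter.mp hp).2, mul_assoc]
    _ = ∑ p ∈ Ioc 0 N ×ˢ Ioc 0 N, (f p.1 : ℂ) * ((g p.2 : ℂ) * z (p.1 * p.2)) := by
        simp only [sum_filter]
        rw [sum_comm]
        refine sum_congr rfl fun p hp => ?_
        obtain ⟨hp₁, hp₂⟩ := mem_product.mp hp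
        rw [sum_ite_eq, ite_eq_left_iff, mem_Ioc, not_and, not_le]
        intro h
        rw [hz _ (h (Nat.mul_pos (mem_Ioc.mp hp₁).1 (mem_Ioc.mp hp₂).1)), mul_zero, mul_zero]
    _ = _ := by simp only [sum_product, mul_sum]

/-- The restriction of an arithmetic function to `n ≤ N`. -/
def truncate (f : ArithmeticFunction ℝ) (N : ℕ) : ArithmeticFunction ℝ :=
  ⟨fun n => if n ≤ N then f n else 0, by simp⟩

section Truncate

variable (f g : ArithmeticFunction ℝ) {M N n : ℕ}

lemma truncate_apply_of_le (h : n ≤ N) : truncate f N n = f n := if_pos h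

lemma truncate_apply_of_lt (h : N < n) : truncate f N n = 0 := if_neg h.not_ge

lemma abs_truncate_apply_le (N n : ℕ) : |truncate f N n| ≤ |f n| := by
  rcases le_or_gt n N with h | h
  · rw [truncate_apply_of_le f h]
  · simp [truncate_apply_of_lt f h]

lemma sub_truncate_apply_of_le (h : n ≤ N) : (f - truncate f N) n = 0 := by
  rw [sub_eq_add_neg, ArithmeticFunction.add_apply, ArithmeticFunction.neg_apply,
    truncate_apply_of_le f h, add_neg_cancel]

lemma sub_truncate_apply_of_lt (h : N < n) : (f - truncate f N) n = f n := by
  rw [sub_eq_add_neg, ArithmeticFunction.add_apply, ArithmeticFunction.neg_apply,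
    truncate_apply_of_lt f h, neg_zero, add_zero]

lemma abs_sub_truncate_apply_le (N n : ℕ) : |(f - truncate f N) n| ≤ |f n| := by
  rcases le_or_gt n N with h | h
  · simp [sub_truncate_apply_of_le f h]
  · rw [sub_truncate_apply_of_lt f h]

lemma truncate_mul_truncate_apply_of_lt (h : M * N < n) : (truncate f M * truncate g N) n = 0 := by
  rw [ArithmeticFunction.mul_apply]
  refine sum_eq_zero fun p hp => ?_
  rw [← (Nat.mem_divisorsAntidiagonal.mp hp).1] at h
  rcases le_or_gt p.1 M with h₁ | h₁
  · have h₂ : N < p.2 := lt_of_not_ge fun h₂ => h.not_ge (Nat.mul_le_mul h₁ h₂)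
    rw [truncate_apply_of_lt g h₂, mul_zero]
  · rw [truncate_apply_of_lt f h₁, zero_mul]

lemma sub_truncate_mul_apply_of_le (h : n ≤ N) : ((f - truncate f N) * g) n = 0 := by
  rw [ArithmeticFunction.mul_apply]
  refine sum_eq_zero fun p hp => ?_
  have hp₁ : p.1 ≤ N := (Nat.divisor_le (Nat.fst_mem_divisors_of_mem_antidiagonal hp)).trans h
  rw [sub_truncate_apply_of_le f hp₁, zero_mul]

end Truncate

lemma vonMangoldt_eq_vaughan (N : ℕ) :
    Λ = truncate Λ N + truncate (μ : ArithmeticFunction ℝ) N * ArithmeticFunction.log -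
      truncate Λ N * truncate (μ : ArithmeticFunction ℝ) N * (ζ : ArithmeticFunction ℝ) +
      ((μ : ArithmeticFunction ℝ) - truncate (μ : ArithmeticFunction ℝ) N) *
        ((Λ - truncate Λ N) * (ζ : ArithmeticFunction ℝ)) := by
  have hmoebius : (μ : ArithmeticFunction ℝ) * (ζ : ArithmeticFunction ℝ) = 1 :=
    ArithmeticFunction.coe_moebius_mul_coe_zeta
  have hlog : Λ * (ζ : ArithmeticFunction ℝ) = ArithmeticFunction.log :=
    ArithmeticFunction.vonMangoldt_mul_zeta
  linear_combination (truncate Λ N - Λ) * hmoebius +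
    truncate (μ : ArithmeticFunction ℝ) N * hlog

lemma sum_vonMangoldt_mul_eq_vaughan (N : ℕ) (s : Finset ℕ) (z : ℕ → ℂ) :
    ∑ n ∈ s, (Λ n : ℂ) * z n =
      ∑ n ∈ s, (truncate Λ N n : ℂ) * z n +
      ∑ n ∈ s, ((truncate (μ : ArithmeticFunction ℝ) N * ArithmeticFunction.log) n : ℂ) * z n -
      ∑ n ∈ s, ((truncate Λ N * truncate (μ : ArithmeticFunction ℝ) N *
        (ζ : ArithmeticFunction ℝ)) n : ℂ) * z n +
      ∑ n ∈ s, ((((μ : ArithmeticFunction ℝ) - truncate (μ : ArithmeticFunction ℝ) N) *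
        ((Λ - truncate Λ N) * (ζ : ArithmeticFunction ℝ))) n : ℂ) * z n := by
  rw [← sum_add_distrib, ← sum_sub_distrib, ← sum_add_distrib]
  refine sum_congr rfl fun n _ => ?_
  conv_lhs => rw [vonMangoldt_eq_vaughan N]
  simp only [← add_mul, ← sub_mul]
  congr 1
  rw [sub_eq_add_neg, ArithmeticFunction.add_apply, ArithmeticFunction.add_apply,
    ArithmeticFunction.add_apply, ArithmeticFunction.neg_apply]
  push_cast
  ring

lemma abs_mul_apply_le_log {f g : ArithmeticFunction ℝ} (hf : ∀ n, |f n| ≤ Λ n)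
    (hg : ∀ n, |g n| ≤ 1) (n : ℕ) : |(f * g) n| ≤ log n := by
  rw [ArithmeticFunction.mul_apply, ← ArithmeticFunction.vonMangoldt_sum,
    ← Nat.sum_divisorsAntidiagonal (fun i _ => Λ i)]
  refine (abs_sum_le_sum_abs _ _).trans (sum_le_sum fun p _ => ?_)
  rw [abs_mul]
  exact (mul_le_of_le_one_right (abs_nonneg _) (hg _)).trans (hf _)

lemma abs_moebius_le_one (n : ℕ) : |(μ : ArithmeticFunction ℝ) n| ≤ 1 := by
  rw [ArithmeticFunction.intCoe_apply]
  exact_mod_cast ArithmeticFunction.abs_moebius_le_one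

lemma abs_zeta_le_one (n : ℕ) : |(ζ : ArithmeticFunction ℝ) n| ≤ 1 := by
  rcases eq_or_ne n 0 with rfl | hn <;> simp [*]

lemma abs_vonMangoldt (n : ℕ) : |Λ n| = Λ n := abs_of_nonneg ArithmeticFunction.vonMangoldt_nonneg

lemma monotone_zeta : Monotone fun n => (ζ : ArithmeticFunction ℝ) n := by
  intro m n hmn
  rcases Nat.eq_zero_or_pos m with rfl | hm
  · simp only [ArithmeticFunction.natCoe_apply, ArithmeticFunction.map_zero]
    exact Nat.cast_nonneg _
  · simp [hm.ne', (hm.trans_le hmn).ne']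

lemma monotone_log_natCast : Monotone fun n : ℕ => log n := by
  intro m n hmn
  rcases Nat.eq_zero_or_pos m with rfl | hm
  · simpa using log_natCast_nonneg n
  · exact log_le_log (by exact_mod_cast hm) (by exact_mod_cast hmn)

/-! ### Sums over primes -/

/-- The bound, up to logarithms, for Type I sums of length `X` with frequency `|α| = A` whose
outer variable is at most `X ^ (1 / 3)`. -/
noncomputable def typeIBound (c X D A : ℝ) : ℝ :=
  X ^ (1 / 3 + c / 2) * D * A ^ (1 / 2 : ℝ) + X ^ (1 - c / 2) * A ^ (-1 / 2 : ℝ)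

section VonMangoldtSum

variable {c mu α X D C : ℝ} {lam : ℕ → ℝ}

lemma typeIBound_nonneg (c : ℝ) (hX : 0 ≤ X) (hD : 0 ≤ D) (α : ℝ) :
    0 ≤ typeIBound c X D |α| := by
  unfold typeIBound
  positivity

lemma log_natCast_le_of_mem_Ioc {n : ℕ} (hX : 0 ≤ X) (hn : n ∈ Ioc 0 ⌊X⌋₊) :
    log n ≤ 1 + log X := by
  obtain ⟨hn0, hnX⟩ := mem_Ioc.mp hn
  have := log_le_log (by exact_mod_cast hn0) ((Nat.le_floor_iff hX).mp hnX)
  linarith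

lemma floor_rpow_third_le (hX : 1 ≤ X) : ⌊X ^ (1 / 3 : ℝ)⌋₊ ≤ ⌊X⌋₊ :=
  Nat.floor_mono (rpow_le_self_of_one_le hX (by norm_num))

lemma sum_Ioc_floor_eq_add {F : ℕ → ℂ} (hX : 1 ≤ X)
    (hF : ∀ m : ℕ, X ^ (2 / 3 : ℝ) < m → F m = 0) :
    ∑ m ∈ Ioc 0 ⌊X⌋₊, F m =
      ∑ m ∈ Ioc 0 ⌊X ^ (1 / 3 : ℝ)⌋₊, F m +
        ∑ m ∈ Ioc ⌊X ^ (1 / 3 : ℝ)⌋₊ ⌊X ^ (2 / 3 : ℝ)⌋₊, F m := by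
  have hle : ⌊X ^ (1 / 3 : ℝ)⌋₊ ≤ ⌊X ^ (2 / 3 : ℝ)⌋₊ := by
    gcongr
    norm_num
  have hle' : ⌊X ^ (2 / 3 : ℝ)⌋₊ ≤ ⌊X⌋₊ :=
    Nat.floor_mono (rpow_le_self_of_one_le hX (by norm_num))
  rw [← sum_Ioc_consecutive F (Nat.zero_le _) hle' , ← sum_Ioc_consecutive F (Nat.zero_le _) hle,
    add_eq_left]
  exact sum_eq_zero fun m hm => hF m (Nat.lt_of_floor_lt (mem_Ioc.mp hm).1)

lemma norm_typeI_le_typeIBound (hC : IsPowerPhaseConstant c mu C) (hC0 : 0 ≤ C) (hmu : 0 ≤ mu)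
    (hX : 1 ≤ X) (hD : 1 ≤ D) (hDX : D ≤ X ^ (1 / 4 : ℝ)) (hα : α ≠ 0) (hlam : ∀ d, |lam d| ≤ 1)
    {a b : ℕ → ℝ} {A B : ℝ} (ha : ∀ m ∈ Ioc 0 ⌊X ^ (1 / 3 : ℝ)⌋₊, |a m| ≤ A) (hA : 0 ≤ A)
    (hb : Monotone b) (hb0 : 0 ≤ b 0) (hB : b ⌊X⌋₊ ≤ B) :
    ‖∑ m ∈ Ioc 0 ⌊X ^ (1 / 3 : ℝ)⌋₊, (a m : ℂ) *
        ∑ l ∈ Ioc 0 ⌊X⌋₊, (b l : ℂ) * sieveKernel c mu α X D lam (m * l)‖ ≤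
      C * (A * B) * ((1 + log X) ^ 2 * typeIBound c X D |α|) := by
  have hX0 : 0 < X := by linarith
  have hα0 : 0 < |α| := abs_pos.mpr hα
  have hL : 1 ≤ (1 + log X) ^ 2 := one_le_pow₀ (by linarith [log_nonneg hX])
  have hDR : D * X ^ (1 / 3 : ℝ) ≤ X := calc
    D * X ^ (1 / 3 : ℝ) ≤ X ^ (1 / 4 : ℝ) * X ^ (1 / 3 : ℝ) := by gcongr
    _ = X ^ (7 / 12 : ℝ) := by rw [← rpow_add hX0]; norm_num
    _ ≤ X := rpow_le_self_of_one_le hX (by norm_num)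
  refine (norm_typeI_le hC hC0 hmu hD (one_le_rpow hX (by norm_num)) hDR hα hlam
    (fun m hm => ⟨(mem_Ioc.mp hm).1, (Nat.le_floor_iff (by positivity)).mp (mem_Ioc.mp hm).2⟩)
    ha hA hb hb0).trans ?_
  have hfirst : D * X ^ (1 / 3 : ℝ) * (√|α| * X ^ (c / 2)) =
      X ^ (1 / 3 + c / 2) * D * |α| ^ (1 / 2 : ℝ) := by
    rw [rpow_add hX0, sqrt_eq_rpow]
    ring
  have hsecond : X ^ (1 - c / 2) / √|α| = X ^ (1 - c / 2) * |α| ^ (-1 / 2 : ℝ) := by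
    rw [neg_div, rpow_neg hα0.le, sqrt_eq_rpow, div_eq_mul_inv]
  rw [hfirst, hsecond, typeIBound, mul_add ((1 + log X) ^ 2)]
  have hB0 : 0 ≤ B := hb0.trans ((hb (Nat.zero_le _)).trans hB)
  gcongr C * (A * ?_) * (?_ + _)
  exact le_mul_of_one_le_left (by positivity) hL

lemma norm_sum_truncate_vonMangoldt_le (hX : 1 ≤ X) (hD : 0 ≤ D) (hDX : D ≤ X ^ (1 / 4 : ℝ))
    (hlam : ∀ d, |lam d| ≤ 1) :
    ‖∑ n ∈ Ioc 0 ⌊X⌋₊, (truncate Λ ⌊X ^ (1 / 3 : ℝ)⌋₊ n : ℂ) * sieveKernel c mu α X D lam n‖ ≤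
      (1 + log X) * X ^ (5 / 6 : ℝ) := by
  have hX0 : 0 < X := by linarith
  have hL : 0 ≤ 1 + log X := by linarith [log_nonneg hX]
  have hcard : (#(Ioc 0 ⌊X ^ (1 / 3 : ℝ)⌋₊) : ℝ) ≤ X ^ (1 / 3 : ℝ) := by
    rw [Nat.card_Ioc, Nat.sub_zero]
    exact Nat.floor_le (by positivity)
  have hterm : ∀ n ∈ Ioc 0 ⌊X ^ (1 / 3 : ℝ)⌋₊,
      ‖(truncate Λ ⌊X ^ (1 / 3 : ℝ)⌋₊ n : ℂ) * sieveKernel c mu α X D lam n‖ ≤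
        (1 + log X) * X ^ (1 / 4 : ℝ) := by
    intro n hn
    rw [norm_mul, Complex.norm_real, norm_eq_abs]
    have hΛ : |truncate Λ ⌊X ^ (1 / 3 : ℝ)⌋₊ n| ≤ 1 + log X :=
      ((abs_truncate_apply_le _ _ _).trans_eq (abs_vonMangoldt n)).trans
        (ArithmeticFunction.vonMangoldt_le_log.trans (log_natCast_le_of_mem_Ioc hX0.le
          (Ioc_subset_Ioc_right (floor_rpow_third_le hX) hn)))
    gcongr
    exact (norm_sieveKernel_le c mu α X hD hlam n).trans hDX
  rw [← sum_subset (Ioc_subset_Ioc_right (floor_rpow_third_le hX)) fun n hn hn' => by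
    rw [truncate_apply_of_lt _ (by grind), Complex.ofReal_zero, zero_mul]]
  calc _ ≤ #(Ioc 0 ⌊X ^ (1 / 3 : ℝ)⌋₊) • ((1 + log X) * X ^ (1 / 4 : ℝ)) :=
        norm_sum_le_of_le _ hterm |>.trans_eq (sum_const _)
    _ ≤ X ^ (1 / 3 : ℝ) * ((1 + log X) * X ^ (1 / 4 : ℝ)) := by
        rw [nsmul_eq_mul]
        gcongr
    _ = (1 + log X) * X ^ (7 / 12 : ℝ) := by
        rw [mul_left_comm, ← rpow_add hX0]
        norm_num
    _ ≤ (1 + log X) * X ^ (5 / 6 : ℝ) := by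
        gcongr (1 + log X) * X ^ ?_
        norm_num

lemma norm_sum_truncate_moebius_mul_log_le (hC : IsPowerPhaseConstant c mu C) (hC0 : 0 ≤ C)
    (hmu : 0 ≤ mu) (hX : 1 ≤ X) (hD : 1 ≤ D) (hDX : D ≤ X ^ (1 / 4 : ℝ)) (hα : α ≠ 0)
    (hlam : ∀ d, |lam d| ≤ 1) :
    ‖∑ n ∈ Ioc 0 ⌊X⌋₊,
        ((truncate (μ : ArithmeticFunction ℝ) ⌊X ^ (1 / 3 : ℝ)⌋₊ * ArithmeticFunction.log) n : ℂ) *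
          sieveKernel c mu α X D lam n‖ ≤
      C * (1 + log X) ^ 3 * typeIBound c X D |α| := by
  rw [sum_mul_eq_sum_sum_of_support _ _ fun n hn => sieveKernel_eq_zero c α D lam (by grind),
    ← sum_subset (Ioc_subset_Ioc_right (floor_rpow_third_le hX)) fun m hm hm' => by
      rw [truncate_apply_of_lt _ (by grind), Complex.ofReal_zero, zero_mul]]
  refine (norm_typeI_le_typeIBound hC hC0 hmu hX hD hDX hα hlam
    (fun m _ => (abs_truncate_apply_le _ _ m).trans (abs_moebius_le_one m)) zero_le_one
    monotone_log_natCast (by simp) (log_natCast_le_of_mem_Ioc (by linarith)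
      (mem_Ioc.mpr ⟨Nat.floor_pos.mpr hX, le_rfl⟩))).trans_eq ?_
  ring

lemma mem_Icc_of_mem_Ioc_floor_rpow {m : ℕ} (hX : 0 ≤ X)
    (hm : m ∈ Ioc ⌊X ^ (1 / 3 : ℝ)⌋₊ ⌊X ^ (2 / 3 : ℝ)⌋₊) :
    (m : ℝ) ∈ Set.Icc (X ^ (1 / 3 : ℝ)) (X ^ (2 / 3 : ℝ)) :=
  have h := (mem_Ioc_floor (by positivity) (by positivity)).mp hm
  ⟨h.1.le, h.2⟩

lemma sq_floor_rpow_third_le (hX : 0 ≤ X) :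
    ((⌊X ^ (1 / 3 : ℝ)⌋₊ * ⌊X ^ (1 / 3 : ℝ)⌋₊ : ℕ) : ℝ) ≤ X ^ (2 / 3 : ℝ) := by
  have hfloor : (⌊X ^ (1 / 3 : ℝ)⌋₊ : ℝ) ≤ X ^ (1 / 3 : ℝ) := Nat.floor_le (by positivity)
  calc ((⌊X ^ (1 / 3 : ℝ)⌋₊ * ⌊X ^ (1 / 3 : ℝ)⌋₊ : ℕ) : ℝ)
      ≤ X ^ (1 / 3 : ℝ) * X ^ (1 / 3 : ℝ) := by
        push_cast
        gcongr
    _ = X ^ (2 / 3 : ℝ) := by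
        rw [← rpow_add_of_nonneg hX (by norm_num) (by norm_num)]
        norm_num

lemma norm_sum_truncate_mul_truncate_mul_zeta_le {C' : ℝ} (hC : IsPowerPhaseConstant c mu C)
    (hC0 : 0 ≤ C) (hC' : IsPowerPhaseConstant c (mu / 4) C') (hC'0 : 0 ≤ C') (hc : 1 ≤ c)
    (hc' : c ≤ 2) (hmu : 0 < mu) (hmu' : mu ≤ 1) (hX : 1 ≤ X) (hD : 1 ≤ D)
    (hDX : D ≤ X ^ (1 / 4 : ℝ)) (hα : α ≠ 0) (hlam : ∀ d, |lam d| ≤ 1) :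
    ‖∑ n ∈ Ioc 0 ⌊X⌋₊, ((truncate Λ ⌊X ^ (1 / 3 : ℝ)⌋₊ *
        truncate (μ : ArithmeticFunction ℝ) ⌊X ^ (1 / 3 : ℝ)⌋₊ *
          (ζ : ArithmeticFunction ℝ)) n : ℂ) * sieveKernel c mu α X D lam n‖ ≤
      C * (1 + log X) ^ 3 * typeIBound c X D |α| +
        8 * blockConstant c (mu / 4) C' * (1 + log X) ^ 4 * typeIIBound c X D |α| := by
  have hX0 : 0 ≤ X := by linarith
  have hL : 0 < 1 + log X := by linarith [log_nonneg hX]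
  set N := ⌊X ^ (1 / 3 : ℝ)⌋₊
  set a := truncate Λ N * truncate (μ : ArithmeticFunction ℝ) N
  have ha : ∀ m ∈ Ioc 0 ⌊X⌋₊, |a m| ≤ 1 + log X := fun m hm =>
    (abs_mul_apply_le_log (fun n => (abs_truncate_apply_le _ _ n).trans_eq (abs_vonMangoldt n))
      (fun n => (abs_truncate_apply_le _ _ n).trans (abs_moebius_le_one n)) m).trans
      (log_natCast_le_of_mem_Ioc hX0 hm)
  have ha0 : ∀ m : ℕ, X ^ (2 / 3 : ℝ) < m → a m = 0 := fun m hm =>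
    truncate_mul_truncate_apply_of_lt _ _
      (by exact_mod_cast (sq_floor_rpow_third_le hX0).trans_lt hm)
  rw [sum_mul_eq_sum_sum_of_support _ _ fun n hn => sieveKernel_eq_zero c α D lam (by grind),
    sum_Ioc_floor_eq_add hX fun m hm => by rw [ha0 m hm, Complex.ofReal_zero, zero_mul]]
  refine (norm_add_le _ _).trans (add_le_add ?_ ?_)
  · refine (norm_typeI_le_typeIBound hC hC0 hmu.le hX hD hDX hα hlam
      (fun m hm => ha m (Ioc_subset_Ioc_right (floor_rpow_third_le hX) hm)) hL.le monotone_zeta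
      (by simp) (le_of_abs_le (abs_zeta_le_one _))).trans_eq ?_
    ring
  · refine (norm_typeII_le hC' hC'0 hc hc' hmu hmu' hα hX hD hDX hlam
      (fun m => mem_Icc_of_mem_Ioc_floor_rpow hX0) hL one_pos (fun m hm => ha m ?_)
      fun l _ => abs_zeta_le_one l).trans_eq ?_
    · refine Ioc_subset_Ioc (Nat.zero_le _) (Nat.floor_mono ?_) hm
      exact rpow_le_self_of_one_le hX (by norm_num)
    · ring

lemma norm_sum_sub_truncate_mul_sub_truncate_mul_zeta_le (hC : IsPowerPhaseConstant c (mu / 4) C)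
    (hC0 : 0 ≤ C) (hc : 1 ≤ c) (hc' : c ≤ 2) (hmu : 0 < mu) (hmu' : mu ≤ 1) (hX : 1 ≤ X)
    (hD : 1 ≤ D) (hDX : D ≤ X ^ (1 / 4 : ℝ)) (hα : α ≠ 0) (hlam : ∀ d, |lam d| ≤ 1) :
    ‖∑ n ∈ Ioc 0 ⌊X⌋₊, ((((μ : ArithmeticFunction ℝ) -
        truncate (μ : ArithmeticFunction ℝ) ⌊X ^ (1 / 3 : ℝ)⌋₊) *
          ((Λ - truncate Λ ⌊X ^ (1 / 3 : ℝ)⌋₊) * (ζ : ArithmeticFunction ℝ))) n : ℂ) *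
            sieveKernel c mu α X D lam n‖ ≤
      8 * blockConstant c (mu / 4) C * (1 + log X) ^ 4 * typeIIBound c X D |α| := by
  have hX0 : 0 ≤ X := by linarith
  have hL : 0 < 1 + log X := by linarith [log_nonneg hX]
  set N := ⌊X ^ (1 / 3 : ℝ)⌋₊
  set b := (Λ - truncate Λ N) * (ζ : ArithmeticFunction ℝ)
  have hb : ∀ l ∈ Ioc 0 ⌊X⌋₊, |b l| ≤ 1 + log X := fun l hl =>
    (abs_mul_apply_le_log (fun n => (abs_sub_truncate_apply_le _ _ n).trans_eq (abs_vonMangoldt n))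
      abs_zeta_le_one l).trans (log_natCast_le_of_mem_Ioc hX0 hl)
  have hlarge : ∀ m : ℕ, X ^ (2 / 3 : ℝ) < m →
      ∑ l ∈ Ioc 0 ⌊X⌋₊, (b l : ℂ) * sieveKernel c mu α X D lam (m * l) = 0 := by
    refine fun m hm => sum_eq_zero fun l _ => ?_
    rcases le_or_gt l N with hl | hl
    · rw [sub_truncate_mul_apply_of_le _ _ hl, Complex.ofReal_zero, zero_mul]
    · have hml : X < m * l := calc
        X = X ^ (2 / 3 : ℝ) * X ^ (1 / 3 : ℝ) := by
          rw [← rpow_add_of_nonneg hX0 (by norm_num) (by norm_num)]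
          norm_num
        _ < m * l := mul_lt_mul'' hm (Nat.lt_of_floor_lt hl) (by positivity) (by positivity)
      have hfloor : ⌊X⌋₊ < m * l := (Nat.floor_lt hX0).mpr (by exact_mod_cast hml)
      rw [sieveKernel_eq_zero c α D lam (by grind), mul_zero]
  rw [sum_mul_eq_sum_sum_of_support _ _ fun n hn => sieveKernel_eq_zero c α D lam (by grind),
    sum_Ioc_floor_eq_add hX fun m hm => by rw [hlarge m hm, mul_zero],
    sum_eq_zero fun m hm => by
      rw [sub_truncate_apply_of_le _ (mem_Ioc.mp hm).2, Complex.ofReal_zero, zero_mul], zero_add]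
  refine (norm_typeII_le hC hC0 hc hc' hmu hmu' hα hX hD hDX hlam
    (fun m => mem_Icc_of_mem_Ioc_floor_rpow hX0) one_pos hL
    (fun m _ => (abs_sub_truncate_apply_le _ _ m).trans (abs_moebius_le_one m)) hb).trans_eq ?_
  ring

theorem norm_sum_vonMangoldt_mul_sieveKernel_le {C' : ℝ} (hC : IsPowerPhaseConstant c mu C)
    (hC0 : 0 ≤ C) (hC' : IsPowerPhaseConstant c (mu / 4) C') (hC'0 : 0 ≤ C') (hc : 1 ≤ c)
    (hc' : c ≤ 2) (hmu : 0 < mu) (hmu' : mu ≤ 1) (hX : 1 ≤ X) (hD : 1 ≤ D)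
    (hDX : D ≤ X ^ (1 / 4 : ℝ)) (hα : α ≠ 0) (hlam : ∀ d, |lam d| ≤ 1) :
    ‖∑ n ∈ Ioc 0 ⌊X⌋₊, (Λ n : ℂ) * sieveKernel c mu α X D lam n‖ ≤
      (1 + 2 * C + 16 * blockConstant c (mu / 4) C') * (1 + log X) ^ 4 *
        (typeIBound c X D |α| + typeIIBound c X D |α|) := by
  set N := ⌊X ^ (1 / 3 : ℝ)⌋₊
  set L := 1 + log X
  set T₁ := typeIBound c X D |α|
  set T₂ := typeIIBound c X D |α|
  set B := blockConstant c (mu / 4) C'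
  have hT₁ : 0 ≤ T₁ := typeIBound_nonneg c (by linarith) (by linarith) α
  have hT₂ : X ^ (5 / 6 : ℝ) ≤ T₂ := rpow_five_sixths_le_typeIIBound (by linarith) (by linarith) α
  have hL : 1 ≤ L := by linarith [log_nonneg hX]
  have hB : 8 ≤ B := eight_le_blockConstant c hC'0
  rw [sum_vonMangoldt_mul_eq_vaughan N]
  calc _ ≤ L * X ^ (5 / 6 : ℝ) + C * L ^ 3 * T₁ + (C * L ^ 3 * T₁ + 8 * B * L ^ 4 * T₂) +
        8 * B * L ^ 4 * T₂ :=
        norm_add_le_of_le (norm_sub_le_of_le (norm_add_le_of_le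
          (norm_sum_truncate_vonMangoldt_le hX (by linarith) hDX hlam)
          (norm_sum_truncate_moebius_mul_log_le hC hC0 hmu.le hX hD hDX hα hlam))
          (norm_sum_truncate_mul_truncate_mul_zeta_le hC hC0 hC' hC'0 hc hc' hmu hmu' hX hD hDX hα
            hlam))
          (norm_sum_sub_truncate_mul_sub_truncate_mul_zeta_le hC' hC'0 hc hc' hmu hmu' hX hD hDX hα
            hlam)
    _ ≤ L ^ 4 * T₂ + C * L ^ 4 * T₁ + (C * L ^ 4 * T₁ + 8 * B * L ^ 4 * T₂) +
        8 * B * L ^ 4 * T₂ := by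
        gcongr
        · exact le_self_pow₀ hL (by norm_num)
        all_goals norm_num
    _ = (1 + 16 * B) * L ^ 4 * T₂ + 2 * C * L ^ 4 * T₁ := by ring
    _ ≤ (1 + 2 * C + 16 * B) * L ^ 4 * T₂ + (1 + 2 * C + 16 * B) * L ^ 4 * T₁ := by
        have : 0 ≤ T₂ := (by positivity : 0 ≤ X ^ (5 / 6 : ℝ)).trans hT₂
        gcongr <;> linarith
    _ = (1 + 2 * C + 16 * B) * L ^ 4 * (T₁ + T₂) := by ring

end VonMangoldtSum

lemma sum_mul_sum_vonMangoldt_eq {c mu α X D : ℝ} {lam : ℕ → ℝ} (hmu : 0 ≤ mu) (hX : 0 ≤ X)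
    (hD : 0 ≤ D) (hlam : ∀ d, 2 ∣ d → lam d = 0) :
    ∑ d ∈ range (⌊D⌋₊ + 1), (lam d : ℂ) *
        ∑ n ∈ (range (⌊X⌋₊ + 1)).filter (fun n : ℕ => mu * X < (n : ℝ) ∧ d ∣ n + 2),
          (Λ n : ℂ) * e (α * (n : ℝ) ^ c) =
      ∑ n ∈ Ioc 0 ⌊X⌋₊, (Λ n : ℂ) * sieveKernel c mu α X D lam n := by
  have hinner (d : ℕ) :
      (range (⌊X⌋₊ + 1)).filter (fun n : ℕ => mu * X < (n : ℝ) ∧ d ∣ n + 2) =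
      {n ∈ Ioc 0 ⌊X⌋₊ | n ∈ Ioc ⌊mu * X⌋₊ ⌊X⌋₊ ∧ d ∣ n + 2} := by
    ext n
    have : mu * X < n ↔ ⌊mu * X⌋₊ < n := (Nat.floor_lt (by positivity)).symm
    grind
  have houter : oddModuli D ⊆ range (⌊D⌋₊ + 1) := fun d hd =>
    mem_range_succ_iff.mpr ((Nat.le_floor_iff hD).mpr ((mem_oddModuli hD).mp hd).1.2)
  rw [← sum_subset houter fun d hd hd' => ?_]
  · simp only [sieveKernel, mul_sum]
    rw [sum_comm]
    refine sum_congr rfl fun d _ => ?_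
    rw [hinner, sum_filter]
    refine sum_congr rfl fun n _ => ?_
    split_ifs <;> ring
  · have : ¬ Odd d := fun hodd => hd' <| (mem_oddModuli hD).mpr
      ⟨⟨hodd.pos, (Nat.le_floor_iff hD).mp (mem_range_succ_iff.mp hd)⟩, hodd⟩
    rw [hlam d (Nat.not_odd_iff_even.mp this).two_dvd, Complex.ofReal_zero, zero_mul]

lemma one_add_log_pow_le {X ε : ℝ} (hX : 1 ≤ X) (hε : 0 < ε) (k : ℕ) (hk : k ≠ 0) :
    (1 + log X) ^ k ≤ (1 + k / ε) ^ k * X ^ ε := by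
  have hX0 : 0 ≤ X := by linarith
  have hk0 : (0 : ℝ) < k := by exact_mod_cast Nat.pos_of_ne_zero hk
  have hlog : 1 + log X ≤ (1 + k / ε) * X ^ (ε / k) := calc
    1 + log X ≤ X ^ (ε / k) + X ^ (ε / k) / (ε / k) :=
      add_le_add (one_le_rpow hX (by positivity)) (log_le_rpow_div hX0 (by positivity))
    _ = (1 + k / ε) * X ^ (ε / k) := by field_simp
  calc (1 + log X) ^ k ≤ ((1 + k / ε) * X ^ (ε / k)) ^ k :=
        pow_le_pow_left₀ (by linarith [log_nonneg hX]) hlog k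
    _ = (1 + k / ε) ^ k * X ^ ε := by
        rw [mul_pow, ← rpow_mul_natCast hX0, div_mul_cancel₀ _ hk0.ne']

lemma typeIBound_add_typeIIBound_le {c X D Δ A M : ℝ} (hX : 0 ≤ X) (hD : 0 ≤ D) (hΔ : 0 < Δ)
    (hΔA : Δ ≤ A) (hAM : A ≤ 2 * M) :
    typeIBound c X D A + typeIIBound c X D A ≤
      2 * (X ^ (1 / 3 + c / 2) * D * M ^ (1 / 2 : ℝ) + X ^ (1 - c / 2) * Δ ^ (-1 / 2 : ℝ) +
        X ^ (3 / 4 + c / 6) * D ^ (2 / 3 : ℝ) * M ^ (1 / 6 : ℝ) + X ^ (5 / 6 : ℝ) +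
        X ^ (1 - c / 6) * D ^ (1 / 3 : ℝ) * Δ ^ (-1 / 6 : ℝ) +
        X ^ (1 - c / 4) * Δ ^ (-1 / 4 : ℝ)) := by
  have hA : 0 < A := hΔ.trans_le hΔA
  have hM : 0 ≤ M := by linarith
  have hpos {p : ℝ} (hp : 0 ≤ p) (hp' : p ≤ 1) : A ^ p ≤ 2 * M ^ p :=
    (rpow_le_rpow hA.le hAM hp).trans <| by
      rw [mul_rpow two_pos.le hM]
      gcongr
      exact rpow_le_self_of_one_le one_le_two hp'
  have hneg {p : ℝ} (hp : p ≤ 0) : A ^ p ≤ 2 * Δ ^ p :=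
    (rpow_le_rpow_of_nonpos hΔ hΔA hp).trans (le_mul_of_one_le_left (by positivity) one_le_two)
  have hX56 : X ^ (5 / 6 : ℝ) ≤ 2 * X ^ (5 / 6 : ℝ) :=
    le_mul_of_one_le_left (by positivity) one_le_two
  calc typeIBound c X D A + typeIIBound c X D A ≤
        X ^ (1 / 3 + c / 2) * D * (2 * M ^ (1 / 2 : ℝ)) +
          X ^ (1 - c / 2) * (2 * Δ ^ (-1 / 2 : ℝ)) +
        (X ^ (3 / 4 + c / 6) * D ^ (2 / 3 : ℝ) * (2 * M ^ (1 / 6 : ℝ)) + 2 * X ^ (5 / 6 : ℝ) +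
          X ^ (1 - c / 6) * D ^ (1 / 3 : ℝ) * (2 * Δ ^ (-1 / 6 : ℝ)) +
          X ^ (1 - c / 4) * (2 * Δ ^ (-1 / 4 : ℝ))) := by
        unfold typeIBound typeIIBound
        gcongr
        · exact hpos (by norm_num) (by norm_num)
        · exact hneg (by norm_num)
        · exact hpos (by norm_num) (by norm_num)
        · exact hneg (by norm_num)
        · exact hneg (by norm_num)
    _ = _ := by ring

theorem stmt_8_general {c mu ε : ℝ} (hc : 1 < c) (hc' : c ≤ 2) (hmu : 0 < mu) (hmu' : mu ≤ 1)
    (hε : 0 < ε) :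
    ∃ C : ℝ, 0 < C ∧ ∀ X D Δ M α : ℝ, ∀ lam : ℕ → ℝ, 1 ≤ X → 1 ≤ D → D ≤ X ^ (1 / 4 : ℝ) →
      (∀ d, |lam d| ≤ 1) → (∀ d, 2 ∣ d → lam d = 0) → 0 < Δ → Δ ≤ |α| → |α| ≤ 2 * M →
      ‖∑ d ∈ range (⌊D⌋₊ + 1), (lam d : ℂ) *
          ∑ n ∈ (range (⌊X⌋₊ + 1)).filter (fun n : ℕ => mu * X < (n : ℝ) ∧ d ∣ n + 2),
            (Λ n : ℂ) * e (α * (n : ℝ) ^ c)‖ ≤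
        C * X ^ ε *
          (X ^ (1 / 3 + c / 2) * D * M ^ (1 / 2 : ℝ) + X ^ (1 - c / 2) * Δ ^ (-1 / 2 : ℝ) +
            X ^ (3 / 4 + c / 6) * D ^ (2 / 3 : ℝ) * M ^ (1 / 6 : ℝ) + X ^ (5 / 6 : ℝ) +
            X ^ (1 - c / 6) * D ^ (1 / 3 : ℝ) * Δ ^ (-1 / 6 : ℝ) +
            X ^ (1 - c / 4) * Δ ^ (-1 / 4 : ℝ)) := by
  obtain ⟨C₁, hC₁0, hC₁⟩ := exists_isPowerPhaseConstant hc hc' hmu hmu'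
  obtain ⟨C₂, hC₂0, hC₂⟩ :=
    exists_isPowerPhaseConstant hc hc' (by positivity : 0 < mu / 4) (by linarith)
  set B := 1 + 2 * C₁ + 16 * blockConstant c (mu / 4) C₂
  have hB : 0 < B := by linarith [eight_le_blockConstant c (κ := mu / 4) hC₂0.le]
  refine ⟨B * (1 + 4 / ε) ^ 4 * 2, by positivity, ?_⟩
  intro X D Δ M α lam hX hD hDX hlam hlam_even hΔ hΔα hαM
  have hα : α ≠ 0 := abs_pos.mp (hΔ.trans_le hΔα)
  have hX0 : 0 ≤ X := by linarith
  have hD0 : 0 ≤ D := by linarith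
  rw [sum_mul_sum_vonMangoldt_eq hmu.le hX0 hD0 hlam_even]
  calc _ ≤ B * (1 + log X) ^ 4 * (typeIBound c X D |α| + typeIIBound c X D |α|) :=
        norm_sum_vonMangoldt_mul_sieveKernel_le hC₁ hC₁0.le hC₂ hC₂0.le hc.le hc' hmu hmu' hX hD
          hDX hα hlam
    _ ≤ B * ((1 + 4 / ε) ^ 4 * X ^ ε) * (2 * _) := by
        gcongr
        · exact add_nonneg (typeIBound_nonneg c hX0 hD0 α)
            (typeIIBound_nonneg c hX0 hD0 (abs_nonneg α))
        · exact_mod_cast one_add_log_pow_le hX hε 4 (by norm_num)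
        · exact typeIBound_add_typeIIBound_le hX0 hD0 hΔ hΔα hαM
    _ = _ := by ring

end Development

theorem stmt_8 (c mu ε : ℝ) (hc1 : 1 < c) (hc2 : c < 17 / 16) (hmu1 : 0 < mu) (hmu2 : mu < 1)
    (hε : 0 < ε) :
    ∃ C : ℝ, 0 < C ∧
      ∀ X : ℝ, 2 ≤ X →
        ∀ M : ℝ, 3 ≤ M →
          ∀ lam : ℕ → ℝ, IsSieveWeight (X ^ ((17 - 16 * c) / 32)) lam →
            ∀ α : ℝ, X ^ ((16 * c - 5) / 32 - c) ≤ |α| → |α| ≤ M + 1 →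
              ‖∑ d ∈ Finset.range (⌊X ^ ((17 - 16 * c) / 32)⌋₊ + 1), (lam d : ℂ) *
                  ∑ n ∈ (Finset.range (⌊X⌋₊ + 1)).filter
                      (fun n : ℕ => mu * X < (n : ℝ) ∧ d ∣ (n + 2)),
                    (Λ n : ℂ) * e (α * (n : ℝ) ^ c)‖ ≤
                C * X ^ ε *
                  (X ^ (1 / 3 + c / 2) * X ^ ((17 - 16 * c) / 32) * M ^ ((1 : ℝ) / 2) +
                    X ^ (1 - c / 2) * (X ^ ((16 * c - 5) / 32 - c)) ^ (-(1 : ℝ) / 2) +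
                    X ^ (3 / 4 + c / 6) * (X ^ ((17 - 16 * c) / 32)) ^ ((2 : ℝ) / 3) *
                      M ^ ((1 : ℝ) / 6) +
                    X ^ ((5 : ℝ) / 6) +
                    X ^ (1 - c / 6) * (X ^ ((17 - 16 * c) / 32)) ^ ((1 : ℝ) / 3) *
                      (X ^ ((16 * c - 5) / 32 - c)) ^ (-(1 : ℝ) / 6) +
                    X ^ (1 - c / 4) * (X ^ ((16 * c - 5) / 32 - c)) ^ (-(1 : ℝ) / 4)) := by
  obtain ⟨C, hC, hbound⟩ := stmt_8_general hc1 (by linarith) hmu1 hmu2.le hε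
  refine ⟨C, hC, fun X hX M hM lam ⟨hlam, hlam_zero⟩ α hΔα hαM => ?_⟩
  exact hbound X _ _ M α lam (by linarith) (Real.one_le_rpow (by linarith) (by linarith))
    (Real.rpow_le_rpow_of_exponent_le (by linarith) (by linarith)) hlam
    (fun d hd => hlam_zero d (.inr (.inl hd))) (by positivity) hΔα (by linarith)
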